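/- arXiv:1409.5822 — 15 statements merged into one kernel-verified Lean document; each statement's English description precedes it below -/
import Mathlib

section
/- Let U be a non-empty finite set of complex roots of unity, and for every natural number k let a_k = Σ_{ζ∈U} ζ^k. Then all a_k are non-negative integers if and only if U is a multiplicative group of roots of unity, i.e. there exists a positive integer n such that U = {ζ ∈ ℂ : ζ^n = 1}. -/
/-!
The power sums `a_k` are the Fourier coefficients of the indicator function of `U` on the group of
`N`-th roots of unity, `N` being a common exponent of the elements of `U`: Fourier inversion says
that, for `z ^ N = 1`, the sum `∑_{k < N} a_k z⁻ᵏ` is `N` if `z ∈ U` and `0` otherwise.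

If all `a_k` are non-negative, then inversion at `z = 1` has a positive left-hand side, because
`a_0 = |U| > 0`; hence `1 ∈ U` and `∑_{k < N} a_k = N`. So `z ∈ U` is the equality case
`∑ a_k z⁻ᵏ = ∑ a_k` of the triangle inequality, which means that `z ^ k = 1` whenever `a_k ≠ 0`.
Therefore `U` is the set of `n`-th roots of unity, where `n` is the gcd of all `k` with `a_k ≠ 0`.

Conversely, multiplication by an element `ω` of the finite group `U` permutes `U` and multiplies
`a_k` by `ω ^ k`, so `a_k` vanishes unless `ω ^ k = 1` for all `ω ∈ U`, when `a_k = |U|`.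
-/

open Finset
open scoped ComplexOrder

section Monoid

variable {M : Type*} [Monoid M]

lemma exists_ne_zero_forall_mem_pow_eq_one {s : Finset M} (hs : ∀ x ∈ s, IsOfFinOrder x) :
    ∃ N ≠ 0, ∀ x ∈ s, x ^ N = 1 :=
  ⟨∏ x ∈ s, orderOf x, prod_ne_zero_iff.2 fun x hx => (hs x hx).orderOf_pos.ne',
    fun _ hx => orderOf_dvd_iff_pow_eq_one.1 (dvd_prod_of_mem _ hx)⟩

lemma pow_setGcd_eq_one_iff {x : M} {s : Set ℕ} :
    x ^ Nat.setGcd s = 1 ↔ ∀ k ∈ s, x ^ k = 1 := by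
  simp only [← orderOf_dvd_iff_pow_eq_one, Nat.dvd_setGcd_iff]

end Monoid

section PowerSums

lemma powerSum_ne_zero {R : Type*} [Semiring R] [CharZero R] {U : Finset R} (hne : U.Nonempty)
    {k : ℕ} (hk : ∀ w ∈ U, w ^ k = 1) : ∑ w ∈ U, w ^ k ≠ 0 := by
  rw [sum_congr rfl hk, sum_const, nsmul_one]
  exact Nat.cast_ne_zero.2 hne.card_ne_zero

lemma sum_range_pow_of_pow_eq_one {R : Type*} [Ring R] [NoZeroDivisors R] [DecidableEq R]
    {u : R} {N : ℕ} (hu : u ^ N = 1) :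
    ∑ k ∈ range N, u ^ k = if u = 1 then (N : R) else 0 := by
  split_ifs with h
  · simp [h]
  · have hmul : (u - 1) * ∑ k ∈ range N, u ^ k = 0 := by rw [mul_geom_sum, hu, sub_self]
    exact (mul_eq_zero.1 hmul).resolve_left (sub_ne_zero.2 h)

section Field

variable {K : Type*} [Field K] {U : Finset K} {N : ℕ}

lemma sum_range_powerSum_mul_inv_pow [DecidableEq K] (hN : N ≠ 0)
    (hU : ∀ w ∈ U, w ^ N = 1) {z : K} (hz : z ^ N = 1) :
    ∑ k ∈ range N, (∑ w ∈ U, w ^ k) * z⁻¹ ^ k = if z ∈ U then (N : K) else 0 := by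
  have hz0 : z ≠ 0 := ne_zero_pow hN (hz ▸ one_ne_zero)
  have hinner : ∀ w ∈ U, ∑ k ∈ range N, (w * z⁻¹) ^ k = if w = z then (N : K) else 0 := by
    intro w hw
    rw [sum_range_pow_of_pow_eq_one (by rw [mul_pow, inv_pow, hU w hw, hz, inv_one, one_mul])]
    simp only [mul_inv_eq_one₀ hz0]
  calc ∑ k ∈ range N, (∑ w ∈ U, w ^ k) * z⁻¹ ^ k
      = ∑ w ∈ U, ∑ k ∈ range N, (w * z⁻¹) ^ k := by
        simp_rw [sum_mul, ← mul_pow]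
        exact sum_comm
    _ = ∑ w ∈ U, if w = z then (N : K) else 0 := sum_congr rfl hinner
    _ = if z ∈ U then (N : K) else 0 := sum_ite_eq' _ _ _

lemma mem_iff_sum_range_powerSum_mul_inv_pow_eq [CharZero K] (hN : N ≠ 0)
    (hU : ∀ w ∈ U, w ^ N = 1) (h1 : 1 ∈ U) {z : K} (hz : z ^ N = 1) :
    z ∈ U ↔ ∑ k ∈ range N, (∑ w ∈ U, w ^ k) * z⁻¹ ^ k = ∑ k ∈ range N, ∑ w ∈ U, w ^ k := by
  classical
  have htotal : ∑ k ∈ range N, ∑ w ∈ U, w ^ k = (N : K) := by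
    simpa [h1] using sum_range_powerSum_mul_inv_pow hN hU (one_pow N)
  have hN0 : (0 : K) ≠ N := (Nat.cast_ne_zero.2 hN).symm
  rw [sum_range_powerSum_mul_inv_pow hN hU hz, htotal, ite_eq_left_iff, not_imp_comm]
  exact (imp_iff_right hN0).symm

end Field

section IsDomain

variable {R : Type*} [CommRing R] [IsDomain R] {U : Finset R}

lemma powerSum_eq_zero_of_mul_mem {ω : R} (hω : ω ≠ 0) (hmul : ∀ z ∈ U, ω * z ∈ U) {k : ℕ}
    (hk : ω ^ k ≠ 1) : ∑ z ∈ U, z ^ k = 0 := by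
  classical
  have hinj : Function.Injective (ω * ·) := mul_right_injective₀ hω
  have himage : U.image (ω * ·) = U :=
    eq_of_subset_of_card_le (image_subset_iff.2 hmul) (card_image_of_injective U hinj).ge
  have hfixed : ω ^ k * ∑ z ∈ U, z ^ k = ∑ z ∈ U, z ^ k := by
    calc ω ^ k * ∑ z ∈ U, z ^ k = ∑ z ∈ U, (ω * z) ^ k := by simp_rw [mul_sum, mul_pow]
      _ = ∑ z ∈ U.image (ω * ·), z ^ k := (sum_image hinj.injOn).symm
      _ = ∑ z ∈ U, z ^ k := by rw [himage]
  by_contra h0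
  exact hk ((mul_eq_right₀ h0).1 hfixed)

lemma exists_powerSum_eq_natCast {n : ℕ} (hn : n ≠ 0) (hU : (U : Set R) = {ζ | ζ ^ n = 1})
    (k : ℕ) : ∃ a : ℕ, ∑ ζ ∈ U, ζ ^ k = a := by
  have hmem (z : R) : z ∈ U ↔ z ^ n = 1 := Set.ext_iff.1 hU z
  by_cases hk : ∀ ω ∈ U, ω ^ k = 1
  · exact ⟨#U, by simp [sum_congr rfl hk]⟩
  · push Not at hk
    obtain ⟨ω, hω, hωk⟩ := hk
    have hω1 : ω ^ n = 1 := (hmem ω).1 hω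
    refine ⟨0, ?_⟩
    rw [Nat.cast_zero]
    refine powerSum_eq_zero_of_mul_mem (ne_zero_pow hn (hω1 ▸ one_ne_zero)) (fun z hz => ?_) hωk
    rw [hmem, mul_pow, hω1, (hmem z).1 hz, one_mul]

end IsDomain

end PowerSums

section RCLike

variable {𝕜 : Type*} [RCLike 𝕜]

lemma eq_one_of_norm_le_one_of_re_eq_one {z : 𝕜} (hz : ‖z‖ ≤ 1) (hre : RCLike.re z = 1) :
    z = 1 := by
  have hsq : ‖z‖ ^ 2 = 1 + RCLike.im z ^ 2 := by rw [RCLike.norm_sq_eq_def, hre]; ring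
  have him : RCLike.im z = 0 := by nlinarith [norm_nonneg z]
  exact RCLike.ext (by simpa using hre) (by simpa using him)

lemma eq_one_of_sum_mul_eq_sum {ι : Type*} {s : Finset ι} {c u : ι → 𝕜}
    (hc : ∀ i ∈ s, 0 ≤ c i) (hu : ∀ i ∈ s, ‖u i‖ ≤ 1)
    (h : ∑ i ∈ s, c i * u i = ∑ i ∈ s, c i) {i : ι} (hi : i ∈ s) (hci : c i ≠ 0) : u i = 1 := by
  have hre_mul : ∀ j ∈ s,
      RCLike.re (c j * (1 - u j)) = RCLike.re (c j) * (1 - RCLike.re (u j)) := by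
    intro j hj
    simp [RCLike.mul_re, (RCLike.nonneg_iff.1 (hc j hj)).2]
  have hnonneg : ∀ j ∈ s, 0 ≤ RCLike.re (c j * (1 - u j)) := fun j hj => by
    rw [hre_mul j hj]
    exact mul_nonneg (RCLike.nonneg_iff.1 (hc j hj)).1
      (sub_nonneg.2 ((RCLike.re_le_norm _).trans (hu j hj)))
  have hsum : ∑ j ∈ s, RCLike.re (c j * (1 - u j)) = 0 := by
    rw [← map_sum]
    simp only [mul_sub, mul_one, sum_sub_distrib, h, sub_self, map_zero]
  have hterm := (sum_eq_zero_iff_of_nonneg hnonneg).1 hsum i hi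
  rw [hre_mul i hi] at hterm
  have hci_re : RCLike.re (c i) ≠ 0 := fun h0 =>
    hci (RCLike.ext (by simpa using h0) (by simpa using (RCLike.nonneg_iff.1 (hc i hi)).2))
  exact eq_one_of_norm_le_one_of_re_eq_one (hu i hi)
    (sub_eq_zero.1 ((mul_eq_zero.1 hterm).resolve_left hci_re)).symm

variable {U : Finset 𝕜} {N : ℕ}

lemma one_mem_of_powerSum_nonneg (hne : U.Nonempty) (hN : N ≠ 0) (hU : ∀ w ∈ U, w ^ N = 1)
    (hnonneg : ∀ k, 0 ≤ ∑ w ∈ U, w ^ k) : 1 ∈ U := by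
  classical
  by_contra h1
  have hsum : ∑ k ∈ range N, ∑ w ∈ U, w ^ k = 0 := by
    simpa [h1] using sum_range_powerSum_mul_inv_pow hN hU (one_pow N)
  have hzero := (sum_eq_zero_iff_of_nonneg fun k _ => hnonneg k).1 hsum 0
    (mem_range.2 (Nat.pos_of_ne_zero hN))
  exact powerSum_ne_zero hne (fun w _ => pow_zero w) hzero

lemma mem_iff_forall_powerSum_ne_zero_pow_eq_one (hne : U.Nonempty) (hN : N ≠ 0)
    (hU : ∀ w ∈ U, w ^ N = 1) (hnonneg : ∀ k, 0 ≤ ∑ w ∈ U, w ^ k) {z : 𝕜} :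
    z ∈ U ↔ ∀ k, ∑ w ∈ U, w ^ k ≠ 0 → z ^ k = 1 := by
  have h1 : 1 ∈ U := one_mem_of_powerSum_nonneg hne hN hU hnonneg
  constructor
  · intro hz k hk
    have hzN : z ^ N = 1 := hU z hz
    have hnorm (j : ℕ) : ‖z⁻¹ ^ j‖ ≤ 1 := by
      simp [(isOfFinOrder_iff_pow_eq_one.2 ⟨N, Nat.pos_of_ne_zero hN, hzN⟩).norm_eq_one]
    have hmod : ∑ w ∈ U, w ^ k = ∑ w ∈ U, w ^ (k % N) :=
      sum_congr rfl fun w hw => pow_eq_pow_mod k (hU w hw)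
    have hinv : z⁻¹ ^ (k % N) = 1 :=
      eq_one_of_sum_mul_eq_sum (fun j _ => hnonneg j) (fun j _ => hnorm j)
        ((mem_iff_sum_range_powerSum_mul_inv_pow_eq hN hU h1 hzN).1 hz)
        (mem_range.2 (Nat.mod_lt k (Nat.pos_of_ne_zero hN))) (hmod ▸ hk)
    rw [pow_eq_pow_mod k hzN]
    simpa only [inv_pow, inv_eq_one] using hinv
  · intro hz
    have hzN : z ^ N = 1 := hz N (powerSum_ne_zero hne hU)
    refine (mem_iff_sum_range_powerSum_mul_inv_pow_eq hN hU h1 hzN).2 (sum_congr rfl fun k _ => ?_)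
    by_cases hk : ∑ w ∈ U, w ^ k = 0
    · rw [hk, zero_mul]
    · rw [inv_pow, hz k hk, inv_one, mul_one]

theorem exists_eq_setOf_pow_eq_one_of_powerSum_nonneg (hne : U.Nonempty)
    (hU : ∀ ζ ∈ U, IsOfFinOrder ζ) (hnonneg : ∀ k, 0 ≤ ∑ ζ ∈ U, ζ ^ k) :
    ∃ n : ℕ, 0 < n ∧ (U : Set 𝕜) = {ζ | ζ ^ n = 1} := by
  obtain ⟨N, hN, hUN⟩ := exists_ne_zero_forall_mem_pow_eq_one hU
  have hmem : N ∈ {k | ∑ ζ ∈ U, ζ ^ k ≠ 0} := powerSum_ne_zero hne hUN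
  refine ⟨Nat.setGcd {k | ∑ ζ ∈ U, ζ ^ k ≠ 0},
    Nat.pos_of_dvd_of_pos (Nat.setGcd_dvd_of_mem hmem) (Nat.pos_of_ne_zero hN), Set.ext fun z => ?_⟩
  exact (mem_iff_forall_powerSum_ne_zero_pow_eq_one hne hN hUN hnonneg).trans
    pow_setGcd_eq_one_iff.symm

theorem roots_of_unity_power_sums_nonneg_int_iff_group_general (hne : U.Nonempty)
    (hU : ∀ ζ ∈ U, IsOfFinOrder ζ) :
    List.TFAE [∀ k : ℕ, 0 ≤ ∑ ζ ∈ U, ζ ^ k,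
      ∀ k : ℕ, ∃ a : ℕ, ∑ ζ ∈ U, ζ ^ k = (a : 𝕜),
      ∃ n : ℕ, 0 < n ∧ (U : Set 𝕜) = {ζ : 𝕜 | ζ ^ n = 1}] := by
  tfae_have 1 → 3 := exists_eq_setOf_pow_eq_one_of_powerSum_nonneg hne hU
  tfae_have 3 → 2 := fun ⟨n, hn, h⟩ => exists_powerSum_eq_natCast hn.ne' h
  tfae_have 2 → 1 := fun h k => by
    obtain ⟨a, ha⟩ := h k
    exact ha ▸ Nat.cast_nonneg a
  tfae_finish

end RCLike

/-- **A theorem on roots of unity.** Let `U` be a non-empty finite set of complex roots of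
unity and consider the power sums `a_k = ∑ ζ ∈ U, ζ ^ k`. Then all `a_k` are non-negative
integers iff `U` is a multiplicative group of roots of unity, i.e. the set of all `n`-th
roots of unity for some `n > 0`. -/
theorem roots_of_unity_power_sums_nonneg_int_iff_group
    (U : Finset ℂ) (hU : U.Nonempty)
    (hroots : ∀ ζ ∈ U, ∃ m : ℕ, 0 < m ∧ ζ ^ m = 1) :
    (∀ k : ℕ, ∃ a : ℕ, (∑ ζ ∈ U, ζ ^ k) = (a : ℂ)) ↔
      ∃ n : ℕ, 0 < n ∧ (U : Set ℂ) = {ζ : ℂ | ζ ^ n = 1} :=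
  (roots_of_unity_power_sums_nonneg_int_iff_group_general hU fun ζ hζ =>
    isOfFinOrder_iff_pow_eq_one.2 (hroots ζ hζ)).out 1 2
end

section
/- The following are equivalent: (i) a_C(E) ≥ 0 for all C ⊆ S; (ii) E is a filter in S, i.e. there exists A ⊆ S with E = {D ⊆ S : A ⊆ D}. -/
open Finset

/-- The alternating sum `a_C(E) = (−1)^{|S|} ∑_{D ∈ E} (−1)^{|C ∪ D|} exp(μ(C \ D))`,
where `μ(C) = ∑_{p ∈ C} w p`. -/
noncomputable def altSum {α : Type*} [DecidableEq α] (S : Finset α) (w : α → ℝ)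
    (E : Finset (Finset α)) (C : Finset α) : ℝ :=
  (-1 : ℝ) ^ S.card * ∑ D ∈ E, (-1 : ℝ) ^ (C ∪ D).card * Real.exp (∑ p ∈ C \ D, w p)

/-!
With `F = {S \ D : D ∈ E}`, the number `a_C(E)` is the value of the generating polynomial
`f(y) = ∑_{B ∈ F} ∏_{p ∈ B} y p` at a vertex of the box `∏ [-1, exp (w p)]`. As `f` is affine in
each variable, non-negativity at the vertices spreads to the whole box, in particular to its
sections by coordinate subspaces. A multiaffine polynomial that is non-negative on a box around the
origin and has zero constant term is zero: a minimal monomial `∏_{p ∈ B} y p`, isolated by setting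
the variables outside `B` to `0`, would change sign.

So `∅ ∈ F`. If `{p} ∈ F`, then `f` restricted to `y p = -1` has zero constant term, hence vanishes,
and `F` is invariant under toggling `p`. Thus `F` contains the powerset of `T = {p | {p} ∈ F}`.
A minimal member `B` of `F` outside this powerset would be disjoint from `T`, so setting the
variables outside `B` to `0` would turn `f` into `1 + ∏_{p ∈ B} y p`. Since `2 ≤ |B|` and
`exp (w p) > 1`, this is negative when one variable is `-1` and the others are maximal.
-/

section MultiaffineEval

variable {α R : Type*} [CommSemiring R] {S U : Finset α} {y z : α → R}

/-- The value at `y` of the multiaffine polynomial in the variables `S` whose coefficient at the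
monomial `∏ p ∈ B, y p` is `c B`; only the values of `c` on subsets of `S` matter. -/
def multiaffineEval (S : Finset α) (c : Finset α → R) (y : α → R) : R :=
  ∑ B ∈ S.powerset, c B * ∏ p ∈ B, y p

lemma multiaffineEval_congr (c : Finset α → R) (h : ∀ p ∈ S, y p = z p) :
    multiaffineEval S c y = multiaffineEval S c z :=
  sum_congr rfl fun B hB ↦ by
    rw [prod_congr rfl fun p hp ↦ h p (mem_powerset.1 hB hp)]

lemma multiaffineEval_add_mul (S : Finset α) (c d : Finset α → R) (t : R) (y : α → R) :
    multiaffineEval S (fun B ↦ c B + t * d B) y =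
      multiaffineEval S c y + t * multiaffineEval S d y := by
  simp only [multiaffineEval, add_mul, sum_add_distrib, mul_sum, mul_assoc]

lemma multiaffineEval_insert [DecidableEq α] {p : α} (hp : p ∉ S) (c : Finset α → R)
    (y : α → R) :
    multiaffineEval (insert p S) c y =
      multiaffineEval S (fun B ↦ c B + y p * c (insert p B)) y := by
  rw [multiaffineEval_add_mul, multiaffineEval, sum_powerset_insert hp, multiaffineEval,
    multiaffineEval, mul_sum]
  congr 1
  refine sum_congr rfl fun B hB ↦ ?_
  rw [prod_insert fun h ↦ hp (mem_powerset.1 hB h), mul_left_comm]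

lemma multiaffineEval_eq_of_subset (hU : U ⊆ S) (c : Finset α → R)
    (hy : ∀ p ∈ S, p ∉ U → y p = 0) : multiaffineEval S c y = multiaffineEval U c y := by
  refine (sum_subset (powerset_mono.2 hU) fun B hBS hBU ↦ ?_).symm
  obtain ⟨p, hpB, hpU⟩ := not_subset.1 (mt mem_powerset.2 hBU)
  rw [prod_eq_zero hpB (hy p (mem_powerset.1 hBS hpB) hpU), mul_zero]

lemma multiaffineEval_indicator {F : Finset (Finset α)} (hF : F ⊆ S.powerset) (y : α → R) :
    multiaffineEval S (Set.indicator F 1) y = ∑ B ∈ F, ∏ p ∈ B, y p := by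
  classical
  simp only [multiaffineEval, Set.indicator_apply, mem_coe, Pi.one_apply, ite_mul, one_mul,
    zero_mul]
  rw [← sum_filter, filter_mem_eq_inter, inter_eq_right.2 hF]

end MultiaffineEval

section NonnegOnBox

variable {α R : Type*} [CommSemiring R] [Preorder R] {l u : α → R} {S U : Finset α}
  {c : Finset α → R}

/-- The multiaffine polynomial in the variables `S` with coefficients `c` is non-negative on the
box `∏ p ∈ S, [l p, u p]`. -/
def NonnegOnBox (l u : α → R) (S : Finset α) (c : Finset α → R) : Prop :=
  ∀ y ∈ (S : Set α).pi fun p ↦ Set.Icc (l p) (u p), 0 ≤ multiaffineEval S c y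

lemma NonnegOnBox.mono (h : NonnegOnBox l u S c) (hU : U ⊆ S)
    (h0 : ∀ p ∈ S, 0 ∈ Set.Icc (l p) (u p)) : NonnegOnBox l u U c := by
  classical
  intro y hy
  have hface : multiaffineEval S c (U.piecewise y 0) = multiaffineEval U c y := by
    rw [multiaffineEval_eq_of_subset hU c fun p _ hp ↦ piecewise_eq_of_notMem _ _ _ hp]
    exact multiaffineEval_congr c fun p hp ↦ piecewise_eq_of_mem _ _ _ hp
  rw [← hface]
  refine h _ fun p hp ↦ ?_
  by_cases hpU : p ∈ U
  · simpa only [piecewise_eq_of_mem _ _ _ hpU] using hy p hpU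
  · simpa only [piecewise_eq_of_notMem _ _ _ hpU, Pi.zero_apply] using h0 p hp

lemma NonnegOnBox.eval_update_nonneg [DecidableEq α] (h : NonnegOnBox l u S c)
    (hlu : ∀ i ∈ S, l i ≤ u i) {p : α} (hp : p ∈ S) :
    0 ≤ multiaffineEval S c (Function.update u p (l p)) :=
  h _ <| Set.update_mem_pi_iff.2
    ⟨fun i hi ↦ Set.right_mem_Icc.2 (hlu i hi.1), fun _ ↦ Set.left_mem_Icc.2 (hlu p hp)⟩

lemma NonnegOnBox.specialize [DecidableEq α] {p : α} {t : R}
    (h : NonnegOnBox l u (insert p S) c) (hp : p ∉ S) (ht : t ∈ Set.Icc (l p) (u p)) :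
    NonnegOnBox l u S (fun B ↦ c B + t * c (insert p B)) := by
  intro y hy
  have hbox : Function.update y p t ∈ (insert p S : Set α).pi fun i ↦ Set.Icc (l i) (u i) :=
    Set.update_mem_pi_iff.2 ⟨fun i hi ↦ hy i (hi.1.resolve_left hi.2), fun _ ↦ ht⟩
  have hnonneg := h _ (by rwa [coe_insert])
  rwa [multiaffineEval_insert hp, Function.update_self, multiaffineEval_congr _ fun i hi ↦
    Function.update_of_ne (ne_of_mem_of_not_mem hi hp) t y] at hnonneg

end NonnegOnBox

section Ordered

variable {α R : Type*} [CommRing R] [LinearOrder R] {l u : α → R} {S : Finset α}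
  {c : Finset α → R}

lemma add_mul_nonneg_of_mem_Icc [IsOrderedRing R] {a b r s t : R} (hr : 0 ≤ a + r * b)
    (hs : 0 ≤ a + s * b) (ht : t ∈ Set.Icc r s) : 0 ≤ a + t * b := by
  rcases le_total 0 b with hb | hb
  · exact hr.trans (by gcongr; exact ht.1)
  · exact hs.trans (add_le_add_right (mul_le_mul_of_nonpos_right ht.2 hb) a)

lemma nonnegOnBox_of_vertices [IsOrderedRing R] [DecidableEq α]
    (h : ∀ C ⊆ S, 0 ≤ multiaffineEval S c (C.piecewise u l)) : NonnegOnBox l u S c := by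
  induction S using Finset.induction_on generalizing c with
  | empty => simpa [NonnegOnBox, multiaffineEval] using h
  | insert p S hp ih =>
    intro y hy
    rw [multiaffineEval_insert hp]
    refine ih (fun C hC ↦ ?_) y fun i hi ↦ hy i (mem_insert_of_mem hi)
    have hlower := h C (hC.trans (subset_insert p S))
    have hupper := h (insert p C) (insert_subset_insert p hC)
    have hcongr : ∀ i ∈ S, (insert p C).piecewise u l i = C.piecewise u l i := fun i hi ↦
      piecewise_insert_of_ne C u l (ne_of_mem_of_not_mem hi hp)
    rw [multiaffineEval_insert hp, multiaffineEval_add_mul,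
      piecewise_eq_of_notMem _ _ _ fun hpC ↦ hp (hC hpC)] at hlower
    rw [multiaffineEval_insert hp, multiaffineEval_congr _ hcongr, multiaffineEval_add_mul,
      piecewise_insert_self] at hupper
    rw [multiaffineEval_add_mul]
    exact add_mul_nonneg_of_mem_Icc hlower hupper (hy p (mem_insert_self p S))

lemma NonnegOnBox.coeff_eq_zero [IsStrictOrderedRing R] (h : NonnegOnBox l u S c)
    (hl : ∀ p ∈ S, l p < 0) (hu : ∀ p ∈ S, 0 < u p) (h0 : c ∅ = 0) {B : Finset α}
    (hB : B ⊆ S) : c B = 0 := by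
  classical
  induction B using Finset.strongInduction with
  | H B ih =>
    obtain rfl | ⟨p, hp⟩ := B.eq_empty_or_nonempty
    · exact h0
    have heval (y : α → R) : multiaffineEval B c y = c B * ∏ i ∈ B, y i :=
      sum_eq_single_of_mem B (mem_powerset_self B) fun A hA hne ↦ by
        have hAB := mem_powerset.1 hA
        rw [ih A (hAB.ssubset_of_ne hne) (hAB.trans hB), zero_mul]
    have hface : NonnegOnBox l u B c := h.mono hB fun i hi ↦ ⟨(hl i hi).le, (hu i hi).le⟩
    have hlu : ∀ i ∈ B, l i ≤ u i := fun i hi ↦ ((hl i (hB hi)).trans (hu i (hB hi))).le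
    have hupper : 0 ≤ c B * ∏ i ∈ B, u i :=
      heval u ▸ hface u fun i hi ↦ Set.right_mem_Icc.2 (hlu i hi)
    have hflip : 0 ≤ c B * (l p * ∏ i ∈ B \ {p}, u i) :=
      prod_update_of_mem hp u (l p) ▸ heval _ ▸ hface.eval_update_nonneg hlu hp
    have hrest : 0 < ∏ i ∈ B \ {p}, u i := prod_pos fun i hi ↦ hu i (hB (sdiff_subset hi))
    refine le_antisymm (nonpos_of_mul_nonneg_left hflip ?_) (nonneg_of_mul_nonneg_left hupper ?_)
    · exact mul_neg_of_neg_of_pos (hl p (hB hp)) hrest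
    · exact prod_pos fun i hi ↦ hu i (hB hi)

end Ordered

section Family

variable {α R : Type*} [CommRing R] [LinearOrder R] [IsStrictOrderedRing R]
  {x : α → R} {S : Finset α} {F : Finset (Finset α)}

lemma NonnegOnBox.empty_mem (h : NonnegOnBox (-1) x S (Set.indicator F 1))
    (hx : ∀ p ∈ S, 0 < x p) (hF : F ⊆ S.powerset) (hne : F.Nonempty) : ∅ ∈ F := by
  obtain ⟨B, hB⟩ := hne
  by_contra h0
  have hzero := h.coeff_eq_zero (fun _ _ ↦ neg_one_lt_zero) hx (by simpa using h0)
    (mem_powerset.1 (hF hB))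
  simp [hB] at hzero

lemma NonnegOnBox.insert_mem_iff [DecidableEq α] (h : NonnegOnBox (-1) x S (Set.indicator F 1))
    (hx : ∀ p ∈ S, 0 < x p) (h0 : ∅ ∈ F) {p : α} (hpS : p ∈ S) (hp : {p} ∈ F) {B : Finset α}
    (hB : B ⊆ S) (hpB : p ∉ B) : insert p B ∈ F ↔ B ∈ F := by
  rw [← insert_erase hpS] at h
  have hslice := h.specialize (notMem_erase p S)
    (Set.left_mem_Icc.2 (neg_one_lt_zero.trans (hx p hpS)).le)
  have hcoeff : (F : Set (Finset α)).indicator (1 : Finset α → R) B +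
      -1 * (F : Set (Finset α)).indicator 1 (insert p B) = 0 :=
    hslice.coeff_eq_zero (fun _ _ ↦ neg_one_lt_zero) (fun i hi ↦ hx i (mem_of_mem_erase hi))
      (by simp [h0, hp]) (subset_erase.2 ⟨hB, hpB⟩)
  by_cases hins : insert p B ∈ F <;> by_cases hBF : B ∈ F <;> simp_all

lemma NonnegOnBox.mem_of_singletons_mem (h : NonnegOnBox (-1) x S (Set.indicator F 1))
    (hx : ∀ p ∈ S, 0 < x p) (h0 : ∅ ∈ F) {B : Finset α} (hBS : B ⊆ S)
    (hB : ∀ p ∈ B, {p} ∈ F) : B ∈ F := by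
  classical
  induction B using Finset.induction_on with
  | empty => exact h0
  | insert p B hp ih =>
    obtain ⟨hpS, hBS⟩ := insert_subset_iff.1 hBS
    obtain ⟨hpF, hBF⟩ := forall_mem_insert _ _ _ |>.1 hB
    exact (h.insert_mem_iff hx h0 hpS hpF hBS hp).2 (ih hBS hBF)

lemma NonnegOnBox.singleton_mem_of_minimal {B : Finset α}
    (h : NonnegOnBox (-1) x B (Set.indicator F 1)) (hx : ∀ p ∈ B, 1 < x p) (h0 : ∅ ∈ F)
    (hB : B ∈ F) (hmin : ∀ A ∈ F, A ⊂ B → A = ∅) {p : α} (hp : p ∈ B) : {p} ∈ F := by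
  classical
  by_contra hpF
  have hrest : 1 < ∏ i ∈ B \ {p}, x i := by
    have hne : (B \ {p}).Nonempty := sdiff_nonempty.2 fun hBp ↦
      hpF (hBp.antisymm (singleton_subset_iff.2 hp) ▸ hB)
    simpa only [prod_const_one] using
      prod_lt_prod_of_nonempty (fun _ _ ↦ zero_lt_one) (fun i hi ↦ hx i (sdiff_subset hi)) hne
  have heval (y : α → R) : multiaffineEval B (Set.indicator F 1) y = 1 + ∏ i ∈ B, y i := by
    rw [multiaffineEval, sum_eq_add_of_mem ∅ B (empty_mem_powerset B) (mem_powerset_self B)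
      (ne_empty_of_mem hp).symm]
    · simp [h0, hB]
    · rintro A hA ⟨hA0, hAB⟩
      have hAF : A ∉ F := fun hAF ↦ hA0 (hmin A hAF ((mem_powerset.1 hA).ssubset_of_ne hAB))
      simp [hAF]
  have hflip : 0 ≤ 1 + -1 * ∏ i ∈ B \ {p}, x i :=
    prod_update_of_mem hp x (-1) ▸ heval _ ▸ h.eval_update_nonneg
      (fun i hi ↦ (neg_one_lt_zero.trans (zero_lt_one.trans (hx i hi))).le) hp
  linarith

lemma NonnegOnBox.singleton_mem (h : NonnegOnBox (-1) x S (Set.indicator F 1))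
    (hx : ∀ p ∈ S, 1 < x p) (h0 : ∅ ∈ F) {B : Finset α} (hBS : B ⊆ S) (hB : B ∈ F) {p : α}
    (hp : p ∈ B) : {p} ∈ F := by
  classical
  have hpos : ∀ i ∈ S, 0 < x i := fun i hi ↦ zero_lt_one.trans (hx i hi)
  induction B using Finset.strongInduction generalizing p with
  | H B ih =>
    by_contra hpF
    have hdisj : ∀ q ∈ B, {q} ∉ F := by
      intro q hq hqF
      have herase : B.erase q ∈ F := by
        rwa [← h.insert_mem_iff hpos h0 (hBS hq) hqF ((erase_subset q B).trans hBS)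
          (notMem_erase q B), insert_erase hq]
      have hpq : p ≠ q := fun hpq ↦ hpF (hpq ▸ hqF)
      exact hpF (ih _ (erase_ssubset hq) ((erase_subset q B).trans hBS) herase
        (mem_erase.2 ⟨hpq, hp⟩))
    have hmin : ∀ A ∈ F, A ⊂ B → A = ∅ := fun A hA hAB ↦
      eq_empty_of_forall_notMem fun q hq ↦
        hdisj q (hAB.subset hq) (ih A hAB (hAB.subset.trans hBS) hA hq)
    have hface := h.mono hBS fun i hi ↦ ⟨neg_one_lt_zero.le, (hpos i hi).le⟩
    exact hpF (hface.singleton_mem_of_minimal (fun i hi ↦ hx i (hBS hi)) h0 hB hmin hp)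

theorem sum_prod_piecewise_nonneg_iff_eq_powerset [DecidableEq α] (hx : ∀ p ∈ S, 1 < x p)
    (hF : F ⊆ S.powerset) (hne : F.Nonempty) :
    (∀ C ⊆ S, 0 ≤ ∑ B ∈ F, ∏ p ∈ B, C.piecewise x (-1) p) ↔ ∃ T ⊆ S, F = T.powerset := by
  have hpos : ∀ p ∈ S, 0 < x p := fun p hp ↦ zero_lt_one.trans (hx p hp)
  constructor
  · intro hvertices
    have h : NonnegOnBox (-1) x S (Set.indicator F 1) := nonnegOnBox_of_vertices fun C hC ↦ by
      rw [multiaffineEval_indicator hF]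
      exact hvertices C hC
    have h0 : ∅ ∈ F := h.empty_mem hpos hF hne
    refine ⟨S.filter fun p ↦ {p} ∈ F, filter_subset _ _, Finset.ext fun B ↦ ?_⟩
    rw [mem_powerset]
    constructor
    · intro hB p hp
      have hBS : B ⊆ S := mem_powerset.1 (hF hB)
      exact mem_filter.2 ⟨hBS hp, h.singleton_mem hx h0 hBS hB hp⟩
    · intro hB
      exact h.mem_of_singletons_mem hpos h0 (hB.trans (filter_subset _ _)) fun p hp ↦
        (mem_filter.1 (hB hp)).2
  · rintro ⟨T, hT, rfl⟩ C -
    rw [← prod_one_add]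
    refine prod_nonneg fun p hp ↦ ?_
    by_cases hpC : p ∈ C
    · simpa only [piecewise_eq_of_mem _ _ _ hpC] using add_nonneg zero_le_one (hpos p (hT hp)).le
    · simp [hpC]

end Family

section AltSum

variable {α : Type*} [DecidableEq α] {S : Finset α}

lemma image_sdiff_powerset (S T : Finset α) :
    T.powerset.image (S \ ·) = S.powerset.filter (S \ T ⊆ ·) := by
  ext D
  simp only [mem_image, mem_powerset, mem_filter]
  constructor
  · rintro ⟨B, hB, rfl⟩
    exact ⟨sdiff_subset, sdiff_subset_sdiff Subset.rfl hB⟩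
  · rintro ⟨hDS, hTD⟩
    exact ⟨S \ D, sdiff_le_comm.1 hTD, Finset.sdiff_sdiff_eq_self hDS⟩

lemma leftInvOn_sdiff {E : Finset (Finset α)} (hES : ∀ D ∈ E, D ⊆ S) :
    Set.LeftInvOn (S \ ·) (S \ ·) (E : Set (Finset α)) :=
  fun D hD ↦ Finset.sdiff_sdiff_eq_self (hES D hD)

lemma image_sdiff_image_sdiff {E : Finset (Finset α)} (hES : ∀ D ∈ E, D ⊆ S) :
    (E.image (S \ ·)).image (S \ ·) = E :=
  image_image.trans ((image_congr (leftInvOn_sdiff hES)).trans image_id')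

lemma exists_image_sdiff_eq_powerset_iff {E : Finset (Finset α)} (hES : ∀ D ∈ E, D ⊆ S) :
    (∃ T ⊆ S, E.image (S \ ·) = T.powerset) ↔ ∃ A ⊆ S, E = S.powerset.filter (A ⊆ ·) := by
  constructor
  · rintro ⟨T, -, hE⟩
    refine ⟨S \ T, sdiff_subset, ?_⟩
    rw [← image_sdiff_powerset, ← hE, image_sdiff_image_sdiff hES]
  · rintro ⟨A, hA, rfl⟩
    refine ⟨S \ A, sdiff_subset, ?_⟩
    have hfilter : (S \ A).powerset.image (S \ ·) = S.powerset.filter (A ⊆ ·) := by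
      rw [image_sdiff_powerset, Finset.sdiff_sdiff_eq_self hA]
    rw [← hfilter, image_sdiff_image_sdiff fun D hD ↦ (mem_powerset.1 hD).trans sdiff_subset]

lemma neg_one_pow_mul_exp_eq_prod_piecewise (w : α → ℝ) {C D : Finset α} (hC : C ⊆ S)
    (hD : D ⊆ S) :
    (-1 : ℝ) ^ S.card * ((-1 : ℝ) ^ (C ∪ D).card * Real.exp (∑ p ∈ C \ D, w p)) =
      ∏ p ∈ S \ D, C.piecewise (fun p ↦ Real.exp (w p)) (-1) p := by
  have hinter : (S \ D) ∩ C = C \ D := by rw [sdiff_inter_right_comm, inter_eq_right.2 hC]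
  have hsdiff : (S \ D) \ C = S \ (C ∪ D) := by rw [sdiff_sdiff_left, sup_eq_union, union_comm]
  have hsign : (-1 : ℝ) ^ S.card * (-1) ^ (C ∪ D).card = (-1) ^ (S \ (C ∪ D)).card := by
    rw [← card_sdiff_add_card_eq_card (union_subset hC hD), pow_add, mul_assoc,
      ← mul_pow, neg_one_mul, neg_neg, one_pow, mul_one]
  rw [prod_piecewise, hinter, hsdiff, ← mul_assoc, hsign, Real.exp_sum, mul_comm]
  simp

lemma altSum_eq_sum_prod_piecewise (w : α → ℝ) {E : Finset (Finset α)} (hES : ∀ D ∈ E, D ⊆ S)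
    {C : Finset α} (hC : C ⊆ S) :
    altSum S w E C =
      ∑ B ∈ E.image (S \ ·), ∏ p ∈ B, C.piecewise (fun p ↦ Real.exp (w p)) (-1) p := by
  rw [altSum, mul_sum, sum_image (leftInvOn_sdiff hES).injOn]
  exact sum_congr rfl fun D hD ↦ neg_one_pow_mul_exp_eq_prod_piecewise w hC (hES D hD)

end AltSum

/-- **A combinatorial principle.** For a nonempty collection `E` of subsets of a finite set
`S` and a strictly positive weight `w`, all alternating sums `a_C(E)` are non-negative iff
`E` is a filter in `S`, i.e. `E = {D ⊆ S : A ⊆ D}` for some `A ⊆ S`. -/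
theorem altSum_nonneg_iff_filter {α : Type*} [DecidableEq α]
    (S : Finset α) (w : α → ℝ) (hw : ∀ p ∈ S, 0 < w p)
    (E : Finset (Finset α)) (hE : E.Nonempty) (hES : ∀ D ∈ E, D ⊆ S) :
    (∀ C ⊆ S, 0 ≤ altSum S w E C) ↔
      ∃ A ⊆ S, E = S.powerset.filter (fun D => A ⊆ D) := by
  have hx : ∀ p ∈ S, 1 < Real.exp (w p) := fun p hp ↦ Real.one_lt_exp_iff.2 (hw p hp)
  have hF : E.image (S \ ·) ⊆ S.powerset :=
    image_subset_iff.2 fun D _ ↦ mem_powerset.2 sdiff_subset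
  calc (∀ C ⊆ S, 0 ≤ altSum S w E C)
    _ ↔ ∀ C ⊆ S, 0 ≤ ∑ B ∈ E.image (S \ ·),
          ∏ p ∈ B, C.piecewise (fun p ↦ Real.exp (w p)) (-1) p :=
      forall₂_congr fun C hC ↦ by rw [altSum_eq_sum_prod_piecewise w hES hC]
    _ ↔ ∃ T ⊆ S, E.image (S \ ·) = T.powerset :=
      sum_prod_piecewise_nonneg_iff_eq_powerset hx hF (hE.image _)
    _ ↔ ∃ A ⊆ S, E = S.powerset.filter (fun D => A ⊆ D) := exists_image_sdiff_eq_powerset_iff hES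
end

section
/- Suppose E is the filter generated by A ⊆ S, i.e. E = {D ⊆ S : A ⊆ D}. Then for every C ⊆ S one has a_C(E) = exp(μ(S\A)) · Π_{p ∈ S\A} (1 + exp(−w(p))) if C ∪ A = S, and a_C(E) = 0 otherwise. -/
/-!
The alternating sum of a filter factorises over the points of `S \ A`. Put `g p = exp (w p)` for
`p ∈ C` and `g p = -1` otherwise. The term of `D`, sign `(-1) ^ |S|` included, is then
`∏ p ∈ S \ D, g p`. As `D` runs over the filter, `S \ D` runs over all subsets of `S \ A`, so the
sum is `∏ p ∈ S \ A, (1 + g p)`, which has a zero factor as soon as `S \ A` has a point outside `C`.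
-/

open Finset

section FinsetProducts

variable {α R : Type*} [DecidableEq α] {A C D S T : Finset α}

lemma neg_one_pow_card_sdiff [Monoid R] [HasDistribNeg R] (hTS : T ⊆ S) :
    (-1 : R) ^ #(S \ T) = (-1) ^ #S * (-1) ^ #T := by
  rw [← card_sdiff_add_card_eq_card hTS, pow_add, mul_assoc, ← pow_add,
    Even.neg_one_pow ⟨#T, rfl⟩, mul_one]

lemma prod_sdiff_ite_mem_neg_one [CommMonoid R] [HasDistribNeg R] (hC : C ⊆ S) (hD : D ⊆ S)
    (f : α → R) :
    ∏ p ∈ S \ D, (if p ∈ C then f p else -1) =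
      (-1) ^ #S * ((-1) ^ #(C ∪ D) * ∏ p ∈ C \ D, f p) := by
  have mem_part : {p ∈ S \ D | p ∈ C} = C \ D := by
    rw [filter_mem_eq_inter, sdiff_inter_right_comm, inter_eq_right.mpr hC]
  have notMem_part : {p ∈ S \ D | p ∉ C} = S \ (C ∪ D) := by
    rw [filter_notMem_eq_sdiff, sdiff_sdiff_left, sup_eq_union, union_comm]
  rw [prod_ite, mem_part, notMem_part, prod_const,
    neg_one_pow_card_sdiff (union_subset hC hD), mul_comm, mul_assoc]

lemma sum_Icc_prod_sdiff [CommSemiring R] (hA : A ⊆ S) (g : α → R) :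
    ∑ D ∈ Icc A S, ∏ p ∈ S \ D, g p = ∏ p ∈ S \ A, (1 + g p) := by
  rw [prod_one_add]
  refine sum_nbij' (S \ ·) (S \ ·) ?_ ?_ ?_ ?_ fun _ _ ↦ rfl
  · intro D hD
    exact mem_powerset.mpr (sdiff_subset_sdiff Subset.rfl (mem_Icc.mp hD).1)
  · intro T hT
    have hAT : A ⊆ S \ T :=
      subset_sdiff.mpr ⟨hA, disjoint_sdiff.mono_right (mem_powerset.mp hT)⟩
    exact mem_Icc.mpr ⟨hAT, sdiff_subset⟩
  · intro D hD
    exact Finset.sdiff_sdiff_eq_self (mem_Icc.mp hD).2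
  · intro T hT
    exact Finset.sdiff_sdiff_eq_self ((mem_powerset.mp hT).trans sdiff_subset)

lemma prod_sdiff_one_add_ite_mem_neg_one [CommRing R] (hA : A ⊆ S) (hC : C ⊆ S) (f : α → R) :
    ∏ p ∈ S \ A, (1 + if p ∈ C then f p else -1) =
      if C ∪ A = S then ∏ p ∈ S \ A, (1 + f p) else 0 := by
  have covers_iff : (∀ p ∈ S \ A, p ∈ C) ↔ C ∪ A = S := by
    rw [← subset_iff, sdiff_le_iff, sup_eq_union, union_comm]
    exact ⟨(union_subset hC hA).antisymm, fun h ↦ h.ge⟩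
  simp only [add_ite, add_neg_cancel, prod_ite_zero, covers_iff]

end FinsetProducts

lemma prod_one_add_exp {α : Type*} (s : Finset α) (w : α → ℝ) :
    ∏ p ∈ s, (1 + Real.exp (w p)) =
      Real.exp (∑ p ∈ s, w p) * ∏ p ∈ s, (1 + Real.exp (-(w p))) := by
  rw [Real.exp_sum, ← prod_mul_distrib]
  refine prod_congr rfl fun p _ ↦ ?_
  rw [mul_add, mul_one, ← Real.exp_add, add_neg_cancel, Real.exp_zero, add_comm]

lemma altSum_Icc_eq_prod {α : Type*} [DecidableEq α] {A C S : Finset α} (hA : A ⊆ S) (hC : C ⊆ S)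
    (w : α → ℝ) :
    altSum S w (Icc A S) C = ∏ p ∈ S \ A, (1 + if p ∈ C then Real.exp (w p) else -1) := by
  rw [altSum, mul_sum, ← sum_Icc_prod_sdiff hA]
  refine sum_congr rfl fun D hD ↦ ?_
  rw [Real.exp_sum, prod_sdiff_ite_mem_neg_one hC (mem_Icc.mp hD).2]

theorem altSum_of_filter_general {α : Type*} [DecidableEq α]
    (S : Finset α) (w : α → ℝ) (A : Finset α) (hA : A ⊆ S) (C : Finset α) (hC : C ⊆ S) :
    altSum S w (S.powerset.filter (fun D => A ⊆ D)) C =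
      if C ∪ A = S then
        Real.exp (∑ p ∈ S \ A, w p) * ∏ p ∈ S \ A, (1 + Real.exp (-(w p)))
      else 0 := by
  rw [← Icc_eq_filter_powerset, altSum_Icc_eq_prod hA hC,
    prod_sdiff_one_add_ite_mem_neg_one hA hC, prod_one_add_exp]

/-- Values of the alternating sums for a filter: if `E = {D ⊆ S : A ⊆ D}` then
`a_C(E) = exp(μ(S \ A)) ∏_{p ∈ S \ A} (1 + exp(−w p))` if `C ∪ A = S`, and `0` otherwise. -/
theorem altSum_of_filter {α : Type*} [DecidableEq α]
    (S : Finset α) (w : α → ℝ) (hw : ∀ p ∈ S, 0 < w p)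
    (A : Finset α) (hA : A ⊆ S) (C : Finset α) (hC : C ⊆ S) :
    altSum S w (S.powerset.filter (fun D => A ⊆ D)) C =
      if C ∪ A = S then
        Real.exp (∑ p ∈ S \ A, w p) * ∏ p ∈ S \ A, (1 + Real.exp (-(w p)))
      else 0 :=
  altSum_of_filter_general S w A hA C hC
end

section
/- Assume |S| > 1 and let E = {D ⊆ S : A ⊆ D} be a filter generated by a nonempty set A ⊆ S (so E ≠ P(S), the full power set). Then for the modified collection Ẽ = E ∪ {∅} there exists C ⊆ S with a_C(Ẽ) < 0. -/
/-!
The witness is `C = S \ {p}` for a suitable `p ∈ S`. The adjoined set `∅` contributes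
`(-1)^{|S|} (-1)^{|S|-1} exp(μ(C)) = -exp(μ(C))` to `a_C`.

If `A ≠ S`, take `p ∈ S \ A`. Toggling `p` in `D` preserves the filter and `C \ D` but flips the
parity of `|C ∪ D|`, so the filter contributes `0` and `a_C = -exp(μ(C)) < 0`.

If `A = S`, the filter is `{S}`, which contributes `1`; hence `a_C = 1 - exp(μ(C))`, which is
negative as soon as `μ(C) > 0`. The sets `S \ {p}` have total mass `(|S| - 1) μ(S) > 0`, so one of
them has positive mass.
-/

open Finset

open scoped symmDiff

lemma exists_sum_erase_pos {ι M : Type*} [DecidableEq ι] [AddCommGroup M] [LinearOrder M]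
    [IsOrderedAddMonoid M] {s : Finset ι} {f : ι → M} (hs : 1 < s.card) (hf : 0 < ∑ i ∈ s, f i) :
    ∃ i ∈ s, 0 < ∑ j ∈ s.erase i, f j := by
  have hlt : ∑ i ∈ s, f i < ∑ _i ∈ s, ∑ j ∈ s, f j := by
    simpa only [sum_const, one_nsmul] using nsmul_lt_nsmul_left hf hs
  obtain ⟨i, hi, hfi⟩ := exists_lt_of_sum_lt hlt
  exact ⟨i, hi, by rwa [sum_erase_eq_sub hi, sub_pos]⟩

section

variable {α : Type*} [DecidableEq α]

lemma neg_one_pow_card_symmDiff_singleton {R : Type*} [Ring R] (D : Finset α) (p : α) :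
    (-1 : R) ^ (D ∆ {p}).card = -(-1) ^ D.card := by
  by_cases hp : p ∈ D
  · have hD : D ∆ {p} = D.erase p := by grind [mem_symmDiff]
    rw [hD, ← card_erase_add_one hp, pow_succ, mul_neg_one, neg_neg]
  · have hD : D ∆ {p} = insert p D := by grind [mem_symmDiff]
    rw [hD, card_insert_of_notMem hp, pow_succ, mul_neg_one]

lemma symmDiff_singleton_mem_Icc {A S D : Finset α} {p : α} (hpS : p ∈ S) (hpA : p ∉ A)
    (hD : D ∈ Icc A S) : D ∆ {p} ∈ Icc A S := by
  simp only [mem_Icc] at hD ⊢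
  grind [mem_symmDiff]

variable {S : Finset α} {w : α → ℝ} {E : Finset (Finset α)}

lemma altSum_insert {C D : Finset α} (hD : D ∉ E) :
    altSum S w (insert D E) C = altSum S w {D} C + altSum S w E C := by
  simp only [altSum, sum_insert hD, sum_singleton, mul_add]

lemma altSum_singleton_self {C : Finset α} (hC : C ⊆ S) : altSum S w {S} C = 1 := by
  rw [altSum, sum_singleton, union_eq_right.2 hC, sdiff_eq_empty_iff_subset.2 hC, sum_empty,
    Real.exp_zero, mul_one, ← mul_pow, neg_one_mul, neg_neg, one_pow]

lemma altSum_singleton_empty_erase {p : α} (hp : p ∈ S) :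
    altSum S w {∅} (S.erase p) = -Real.exp (∑ q ∈ S.erase p, w q) := by
  rw [altSum, sum_singleton, union_empty, sdiff_empty, ← mul_assoc, ← card_erase_add_one hp,
    ← pow_add, Odd.neg_one_pow (by grind), neg_one_mul]

lemma altSum_eq_zero_of_symmDiff_singleton_mem {C : Finset α} {p : α} (hp : p ∉ C)
    (hE : ∀ D ∈ E, D ∆ {p} ∈ E) : altSum S w E C = 0 := by
  have hunion (D : Finset α) : C ∪ D ∆ {p} = (C ∪ D) ∆ {p} := by grind [mem_symmDiff]
  have hsdiff (D : Finset α) : C \ D ∆ {p} = C \ D := by grind [mem_symmDiff]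
  rw [altSum, sum_involution (fun D _ => D ∆ {p}) _ _ hE, mul_zero]
  · intro D _
    exact symmDiff_symmDiff_cancel_right _ _
  · intro D _
    rw [hunion, hsdiff, neg_one_pow_card_symmDiff_singleton, neg_mul, add_neg_cancel]
  · intro D _ _ hfix
    exact singleton_ne_empty p (symmDiff_eq_left.1 hfix)

lemma exists_altSum_insert_empty_Icc_neg_of_ssubset {A : Finset α} (hAS : A ⊂ S)
    (hAne : A.Nonempty) : ∃ C ⊆ S, altSum S w (insert ∅ (Icc A S)) C < 0 := by
  obtain ⟨p, hpS, hpA⟩ := exists_of_ssubset hAS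
  refine ⟨S.erase p, erase_subset _ _, ?_⟩
  have hempty : ∅ ∉ Icc A S := fun h => hAne.ne_empty (subset_empty.1 (mem_Icc.1 h).1)
  rw [altSum_insert hempty, altSum_singleton_empty_erase hpS,
    altSum_eq_zero_of_symmDiff_singleton_mem (notMem_erase p S)
      fun _ => symmDiff_singleton_mem_Icc hpS hpA, add_zero]
  exact neg_lt_zero.2 (Real.exp_pos _)

lemma exists_altSum_pair_empty_self_neg (hS : 1 < S.card) (hw : 0 < ∑ p ∈ S, w p) :
    ∃ C ⊆ S, altSum S w {∅, S} C < 0 := by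
  obtain ⟨p, hpS, hpos⟩ := exists_sum_erase_pos hS hw
  refine ⟨S.erase p, erase_subset _ _, ?_⟩
  have hempty : ∅ ∉ ({S} : Finset (Finset α)) := by
    simpa only [mem_singleton] using (ne_empty_of_mem hpS).symm
  rw [altSum_insert hempty, altSum_singleton_empty_erase hpS,
    altSum_singleton_self (erase_subset p S), neg_add_lt_iff_lt_add, add_zero]
  exact Real.one_lt_exp_iff.2 hpos

end

theorem altSum_neg_of_filter_union_empty_general {α : Type*} [DecidableEq α]
    (S : Finset α) (hS : 1 < S.card) (w : α → ℝ)
    (A : Finset α) (hA : A ⊆ S) (hAne : A.Nonempty) (hw : A = S → 0 < ∑ p ∈ S, w p) :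
    ∃ C ⊆ S, altSum S w (insert ∅ (S.powerset.filter (fun D => A ⊆ D))) C < 0 := by
  rw [← Icc_eq_filter_powerset]
  rcases hA.eq_or_ssubset with rfl | hAS
  · rw [Icc_self]
    exact exists_altSum_pair_empty_self_neg hS (hw rfl)
  · exact exists_altSum_insert_empty_Icc_neg_of_ssubset hAS hAne

/-- If `|S| > 1` and `E` is the filter generated by a nonempty `A ⊆ S` (so `E ≠ P(S)`), then
adjoining the empty set to `E` produces a negative alternating sum `a_C` for some `C ⊆ S`. -/
theorem altSum_neg_of_filter_union_empty {α : Type*} [DecidableEq α]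
    (S : Finset α) (hS : 1 < S.card) (w : α → ℝ) (hw : ∀ p ∈ S, 0 < w p)
    (A : Finset α) (hA : A ⊆ S) (hAne : A.Nonempty) :
    ∃ C ⊆ S, altSum S w (insert ∅ (S.powerset.filter (fun D => A ⊆ D))) C < 0 := by
  exact altSum_neg_of_filter_union_empty_general S hS w A hA hAne
    fun _ => sum_pos hw (hAne.mono hA)
end

section
/- Assume |S| > 1 and let Ẽ = P(S) \ {∅} be the collection of all nonempty subsets of S. Then there exists C ⊆ S with a_C(Ẽ) < 0. -/
/-!
If `C` misses some `a ∈ S`, toggling membership of `a` in `D` flips the sign of `(-1)^|C ∪ D|` and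
leaves `C \ D` unchanged, so the alternating sum over the full power set vanishes. Removing `D = ∅`
therefore leaves `a_C(Ẽ) = -(-1)^(|S| + |C|) exp (μ C)`, which is negative as soon as
`|C| ≡ |S|` mod 2, for instance when `|C| = |S| - 2`.
-/

open Finset

section

variable {α : Type*} [DecidableEq α] {S C : Finset α}

theorem sum_powerset_eq_zero_of_insert_eq_neg {M : Type*} [AddCommGroup M] {f : Finset α → M}
    {a : α} (ha : a ∈ S) (hf : ∀ D ⊆ S.erase a, f (insert a D) = -f D) :
    ∑ D ∈ S.powerset, f D = 0 := by
  rw [← insert_erase ha, sum_powerset_insert (notMem_erase a S), ← sum_add_distrib]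
  exact sum_eq_zero fun D hD => by rw [hf D (mem_powerset.1 hD), add_neg_cancel]

theorem sum_powerset_neg_one_pow_card_union_mul_sdiff {R : Type*} [Ring R] (h : ¬S ⊆ C)
    (g : Finset α → R) : ∑ D ∈ S.powerset, (-1) ^ (C ∪ D).card * g (C \ D) = 0 := by
  obtain ⟨a, haS, haC⟩ := not_subset.1 h
  refine sum_powerset_eq_zero_of_insert_eq_neg haS fun D hD => ?_
  have haD : a ∉ C ∪ D := notMem_union.2 ⟨haC, fun haD => notMem_erase a S (hD haD)⟩
  rw [sdiff_insert_of_notMem haC, union_insert, card_insert_of_notMem haD, pow_succ, mul_neg_one,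
    neg_mul]

theorem altSum_erase {E : Finset (Finset α)} {D : Finset α} (hD : D ∈ E) (w : α → ℝ) :
    altSum S w (E.erase D) C =
      altSum S w E C - (-1) ^ (S.card + (C ∪ D).card) * Real.exp (∑ p ∈ C \ D, w p) := by
  rw [altSum, altSum, sum_erase_eq_sub hD, mul_sub, pow_add, mul_assoc]

theorem altSum_powerset_eq_zero (h : ¬S ⊆ C) (w : α → ℝ) : altSum S w S.powerset C = 0 := by
  rw [altSum, sum_powerset_neg_one_pow_card_union_mul_sdiff h fun B => Real.exp (∑ p ∈ B, w p),
    mul_zero]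

theorem altSum_powerset_erase_empty (h : ¬S ⊆ C) (w : α → ℝ) :
    altSum S w (S.powerset.erase ∅) C =
      -((-1) ^ (S.card + C.card) * Real.exp (∑ p ∈ C, w p)) := by
  rw [altSum_erase (empty_mem_powerset S), altSum_powerset_eq_zero h, zero_sub, union_empty,
    sdiff_empty]

theorem altSum_powerset_erase_empty_neg (h : ¬S ⊆ C) (hcard : Even (S.card + C.card))
    (w : α → ℝ) : altSum S w (S.powerset.erase ∅) C < 0 := by
  rw [altSum_powerset_erase_empty h, hcard.neg_one_pow, one_mul]
  exact neg_neg_of_pos (Real.exp_pos _)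

theorem altSum_neg_of_powerset_erase_empty_general (hS : 1 < S.card) (w : α → ℝ) :
    ∃ C ⊆ S, altSum S w (S.powerset.erase ∅) C < 0 := by
  obtain ⟨C, hCS, hC⟩ := exists_subset_card_eq (Nat.sub_le S.card 2)
  have hSC : ¬S ⊆ C := fun h => by have := card_le_card h; lia
  have heven : Even (S.card + C.card) := ⟨S.card - 1, by lia⟩
  exact ⟨C, hCS, altSum_powerset_erase_empty_neg hSC heven w⟩

end

/-- If `|S| > 1` and `Ẽ = P(S) \ {∅}` is the collection of all nonempty subsets of `S`,
then some alternating sum `a_C(Ẽ)` is negative. -/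
theorem altSum_neg_of_powerset_erase_empty {α : Type*} [DecidableEq α]
    (S : Finset α) (hS : 1 < S.card) (w : α → ℝ) (hw : ∀ p ∈ S, 0 < w p) :
    ∃ C ⊆ S, altSum S w (S.powerset.erase ∅) C < 0 :=
  altSum_neg_of_powerset_erase_empty_general hS w
end

section
/- For every p ∈ S and every C ⊆ S \ {p} one has a_C^p(E_p) = (exp(w(p))·a_C(E) + a_{C∪{p}}(E)) / (1 + exp(w(p))). In particular, if a_C(E) ≥ 0 for all C ⊆ S, then a_C^p(E_p) ≥ 0 for all C ⊆ S \ {p}. -/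
/-!
With `u = exp ∘ w`, the summand of `a_C(E)` at `D` is `t(C, D) = (−1)^{|C ∪ D|} ∏_{q ∈ C \ D} u q`.
Let `p ∉ C`. If `p ∉ D`, adding `p` to `C` multiplies `t(C, D)` by `−u p`, so such `D` cancel in
`u p · a_C(E) + a_{C ∪ {p}}(E)`. If `p ∈ D`, adding `p` to `C` changes nothing, and passing from `D`
to `D \ {p}` only flips the sign, which the change from `(−1)^{|S|}` to `(−1)^{|S|−1}` absorbs;
hence such `D` contribute `1 + u p` times their share of `a_C^p(E_p)`.
-/

open Finset

/-- The reduced collection `E_p = {D \ {p} : D ∈ E, p ∈ D}` of subsets of `S \ {p}`. -/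
def reducedColl {α : Type*} [DecidableEq α] (E : Finset (Finset α)) (p : α) :
    Finset (Finset α) :=
  (E.filter (fun D => p ∈ D)).image (fun D => D.erase p)

/-- The alternating sum `a_C^p(E_p) = (−1)^{|S|−1} ∑_{D ∈ E_p} (−1)^{|C ∪ D|} exp(μ(C \ D))`
for the reduced collection `E_p` on `S \ {p}`. -/
noncomputable def altSumRed {α : Type*} [DecidableEq α] (S : Finset α) (w : α → ℝ)
    (E : Finset (Finset α)) (p : α) (C : Finset α) : ℝ :=
  (-1 : ℝ) ^ (S.card - 1) *
    ∑ D ∈ reducedColl E p, (-1 : ℝ) ^ (C ∪ D).card * Real.exp (∑ q ∈ C \ D, w q)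

theorem sum_reducedColl {α M : Type*} [DecidableEq α] [AddCommMonoid M] (E : Finset (Finset α))
    (p : α) (f : Finset α → M) :
    ∑ D ∈ reducedColl E p, f D = ∑ D ∈ E with p ∈ D, f (D.erase p) :=
  sum_image fun _ hD _ hD' h => erase_injOn' p (mem_filter.1 hD).2 (mem_filter.1 hD').2 h

section SignedProd

variable {α R : Type*} [DecidableEq α] [CommRing R]

/-- The signed product `(−1)^{|C ∪ D|} ∏_{q ∈ C \ D} u q`. For `u = exp ∘ w` it is the summand
`(−1)^{|C ∪ D|} exp(μ(C \ D))` of `a_C(E)`. -/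
def signedProd (u : α → R) (C D : Finset α) : R :=
  (-1) ^ (C ∪ D).card * ∏ q ∈ C \ D, u q

theorem signedProd_insert_of_mem (u : α → R) (C : Finset α) {D : Finset α} {p : α} (hpD : p ∈ D) :
    signedProd u (insert p C) D = signedProd u C D := by
  rw [signedProd, signedProd, insert_union, insert_eq_of_mem (mem_union_right C hpD),
    insert_sdiff_of_mem C hpD]

theorem signedProd_insert_of_notMem (u : α → R) {C D : Finset α} {p : α} (hpC : p ∉ C)
    (hpD : p ∉ D) : signedProd u (insert p C) D = -(u p * signedProd u C D) := by
  have hp_union : p ∉ C ∪ D := by simp [hpC, hpD]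
  have hp_sdiff : p ∉ C \ D := by simp [hpC]
  rw [signedProd, signedProd, insert_union, card_insert_of_notMem hp_union,
    insert_sdiff_of_notMem C hpD, prod_insert hp_sdiff, pow_succ]
  ring

theorem signedProd_erase_of_mem (u : α → R) {C D : Finset α} {p : α} (hpC : p ∉ C)
    (hpD : p ∈ D) : signedProd u C (D.erase p) = -signedProd u C D := by
  have union_eq : C ∪ D = insert p (C ∪ D.erase p) := by
    rw [← union_insert, insert_erase hpD]
  have hp_union : p ∉ C ∪ D.erase p := by simp [hpC]
  have sdiff_eq : C \ D.erase p = C \ D := by grind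
  rw [signedProd, signedProd, union_eq, card_insert_of_notMem hp_union, sdiff_eq, pow_succ]
  ring

theorem mul_sum_signedProd_add_sum_signedProd_insert (u : α → R) (E : Finset (Finset α))
    {C : Finset α} {p : α} (hpC : p ∉ C) :
    u p * ∑ D ∈ E, signedProd u C D + ∑ D ∈ E, signedProd u (insert p C) D =
      -((1 + u p) * ∑ D ∈ reducedColl E p, signedProd u C D) := by
  have term_eq (D : Finset α) : u p * signedProd u C D + signedProd u (insert p C) D =
      if p ∈ D then -((1 + u p) * signedProd u C (D.erase p)) else 0 := by
    split_ifs with hpD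
    · rw [signedProd_insert_of_mem u C hpD, signedProd_erase_of_mem u hpC hpD]
      ring
    · rw [signedProd_insert_of_notMem u hpC hpD, add_neg_cancel]
  calc u p * ∑ D ∈ E, signedProd u C D + ∑ D ∈ E, signedProd u (insert p C) D
    _ = ∑ D ∈ E, (u p * signedProd u C D + signedProd u (insert p C) D) := by
      rw [mul_sum, sum_add_distrib]
    _ = ∑ D ∈ E with p ∈ D, -((1 + u p) * signedProd u C (D.erase p)) := by
      simp only [term_eq, sum_filter]
    _ = -((1 + u p) * ∑ D ∈ reducedColl E p, signedProd u C D) := by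
      rw [sum_neg_distrib, ← mul_sum, sum_reducedColl]

end SignedProd

section AltSum

variable {α : Type*} [DecidableEq α] (S : Finset α) (w : α → ℝ) (E : Finset (Finset α))

theorem altSum_eq_mul_sum_signedProd (C : Finset α) :
    altSum S w E C = (-1) ^ S.card * ∑ D ∈ E, signedProd (fun q => Real.exp (w q)) C D := by
  simp only [altSum, signedProd, Real.exp_sum]

variable {S} {p : α}

theorem altSumRed_eq_altSum_erase (hp : p ∈ S) (C : Finset α) :
    altSumRed S w E p C = altSum (S.erase p) w (reducedColl E p) C := by
  rw [altSumRed, altSum, card_erase_of_mem hp]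

theorem altSumRed_mul_one_add_exp (hp : p ∈ S) {C : Finset α} (hpC : p ∉ C) :
    altSumRed S w E p C * (1 + Real.exp (w p)) =
      Real.exp (w p) * altSum S w E C + altSum S w E (insert p C) := by
  have sum_eq := mul_sum_signedProd_add_sum_signedProd_insert (fun q => Real.exp (w q)) E hpC
  rw [altSumRed_eq_altSum_erase w E hp]
  simp only [altSum_eq_mul_sum_signedProd, ← card_erase_add_one hp, pow_succ]
  linear_combination (-1) ^ (S.erase p).card * sum_eq

theorem altSumRed_eq_div (hp : p ∈ S) {C : Finset α} (hpC : p ∉ C) :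
    altSumRed S w E p C =
      (Real.exp (w p) * altSum S w E C + altSum S w E (insert p C)) / (1 + Real.exp (w p)) :=
  eq_div_of_mul_eq (by positivity) (altSumRed_mul_one_add_exp w E hp hpC)

end AltSum

theorem altSumRed_eq_and_nonneg_general {α : Type*} [DecidableEq α]
    (S : Finset α) (w : α → ℝ) (E : Finset (Finset α)) (p : α) (hp : p ∈ S) :
    (∀ C ⊆ S.erase p,
      altSumRed S w E p C =
        (Real.exp (w p) * altSum S w E C + altSum S w E (insert p C)) /
          (1 + Real.exp (w p))) ∧
    ((∀ C ⊆ S, 0 ≤ altSum S w E C) → ∀ C ⊆ S.erase p, 0 ≤ altSumRed S w E p C) := by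
  refine ⟨fun C hC => altSumRed_eq_div w E hp (subset_erase.1 hC).2, fun nonneg C hC => ?_⟩
  obtain ⟨hCS, hpC⟩ := subset_erase.1 hC
  have nonneg_C := nonneg C hCS
  have nonneg_insert := nonneg (insert p C) (insert_subset hp hCS)
  rw [altSumRed_eq_div w E hp hpC]
  positivity

/-- For every `p ∈ S` and every `C ⊆ S \ {p}` one has
`a_C^p(E_p) = (exp(w p) · a_C(E) + a_{C ∪ {p}}(E)) / (1 + exp(w p))`.
In particular, if `a_C(E) ≥ 0` for all `C ⊆ S` then `a_C^p(E_p) ≥ 0` for all `C ⊆ S \ {p}`. -/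
theorem altSumRed_eq_and_nonneg {α : Type*} [DecidableEq α]
    (S : Finset α) (w : α → ℝ) (hw : ∀ p ∈ S, 0 < w p)
    (E : Finset (Finset α)) (hES : ∀ D ∈ E, D ⊆ S) (p : α) (hp : p ∈ S) :
    (∀ C ⊆ S.erase p,
      altSumRed S w E p C =
        (Real.exp (w p) * altSum S w E C + altSum S w E (insert p C)) /
          (1 + Real.exp (w p))) ∧
    ((∀ C ⊆ S, 0 ≤ altSum S w E C) → ∀ C ⊆ S.erase p, 0 ≤ altSumRed S w E p C) :=
  altSumRed_eq_and_nonneg_general S w E p hp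
end

section
/- Let E be a collection of subsets of a finite set S such that for every p ∈ S there exists D ∈ E with p ∈ D, and such that for every p ∈ S the collection E_p = {D \ {p} : D ∈ E, p ∈ D} is a filter in S \ {p}, say generated by A_p ⊆ S \ {p}. Then either there exists p ∈ S with p ∈ A_q for all q ≠ p, or A_p = ∅ for all p ∈ S. In the first case, E equals the filter in S generated by {p} ∪ A_p, or this filter together with the empty set. In the second case, E = P(S) or E = P(S) \ {∅}. -/
/-!
For an atom `p ≤ D ≤ S` the hypothesis says `D ∈ E ↔ A p ≤ D`. Testing `D = p ⊔ q ⊔ A p` through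
both `p` and `q` gives `A q ≤ p ⊔ A p`. Hence an atom `r` below some `A q` is below `A s` for every
atom `s ≠ r`; every nonzero member of `E` then lies above `r`, so the criterion at `r` determines
`E` up to `⊥`. If there is no such `r`, every `A p` is `⊥` and the criterion puts every nonzero
element below `S` in `E`.
-/

open Finset

theorem eq_or_eq_insert_of_sdiff_singleton_eq {β : Type*} {s t : Set β} {a : β}
    (h : s \ {a} = t) : s = t ∨ s = insert a t := by
  subst h
  by_cases ha : a ∈ s
  · exact .inr (Set.insert_sdiff_self_of_mem ha).symm
  · exact .inl (Set.sdiff_singleton_eq_self ha).symm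

section Reductions

variable {L : Type*} [GeneralizedBooleanAlgebra L]

/-- The reduced collection `E_p = {D \ p : D ∈ E, p ≤ D}` in a generalized Boolean algebra; in
`Set α` or `Finset α` the paper's `p` is the atom `{p}`. -/
def reducedFamily (E : Set L) (p : L) : Set L :=
  (· \ p) '' {D ∈ E | p ≤ D}

/-- `A` gives, for every atom `p ≤ S`, a generator `A p ≤ S \ p` of the reduced collection `E_p`,
which is thus a principal filter in `S \ p`. The values of `A` elsewhere are irrelevant. -/
structure GeneratesReductions (A : L → L) (E : Set L) (S : L) : Prop where
  generator_le : ∀ p ≤ S, IsAtom p → A p ≤ S \ p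
  reducedFamily_eq : ∀ p ≤ S, IsAtom p → reducedFamily E p = Set.Icc (A p) (S \ p)

variable {A : L → L} {E : Set L} {S p q r D : L}

theorem sdiff_mem_reducedFamily_iff (hpD : p ≤ D) : D \ p ∈ reducedFamily E p ↔ D ∈ E := by
  refine ⟨?_, fun hD => ⟨D, ⟨hD, hpD⟩, rfl⟩⟩
  rintro ⟨D', ⟨hD', hpD'⟩, heq : D' \ p = D \ p⟩
  rwa [← sdiff_sup_cancel hpD, ← heq, sdiff_sup_cancel hpD']

namespace GeneratesReductions

theorem disjoint_generator (hA : GeneratesReductions A E S) (hp : IsAtom p) (hpS : p ≤ S) :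
    Disjoint (A p) p :=
  (le_sdiff.1 (hA.generator_le p hpS hp)).2

theorem mem_iff (hA : GeneratesReductions A E S) (hp : IsAtom p) (hpD : p ≤ D) (hDS : D ≤ S) :
    D ∈ E ↔ A p ≤ D := by
  have hpS : p ≤ S := hpD.trans hDS
  rw [← sdiff_mem_reducedFamily_iff hpD, hA.reducedFamily_eq p hpS hp, Set.mem_Icc,
    le_sdiff, and_iff_left (hA.disjoint_generator hp hpS), and_iff_left (sdiff_le_sdiff_right hDS)]

theorem generator_le_sup (hA : GeneratesReductions A E S) (hp : IsAtom p) (hpS : p ≤ S)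
    (hq : IsAtom q) (hqS : q ≤ S) : A q ≤ p ⊔ A p := by
  have hDS : q ⊔ (p ⊔ A p) ≤ S :=
    sup_le hqS (sup_le hpS ((hA.generator_le p hpS hp).trans sdiff_le))
  have hD : q ⊔ (p ⊔ A p) ∈ E :=
    (hA.mem_iff hp (le_sup_left.trans le_sup_right) hDS).2 (le_sup_right.trans le_sup_right)
  have hAq : A q ≤ q ⊔ (p ⊔ A p) := (hA.mem_iff hq le_sup_left hDS).1 hD
  exact (hA.disjoint_generator hq hqS).left_le_of_le_sup_left hAq

theorem atom_le_generator_of_ne (hA : GeneratesReductions A E S) (hp : IsAtom p) (hpS : p ≤ S)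
    (hq : IsAtom q) (hqS : q ≤ S) (hr : IsAtom r) (hrq : r ≤ A q) (hpr : p ≠ r) : r ≤ A p :=
  (hr.disjoint_of_ne hp hpr.symm).left_le_of_le_sup_left
    (hrq.trans (hA.generator_le_sup hp hpS hq hqS))

variable [IsAtomic L]

theorem sdiff_bot_eq_Icc (hA : GeneratesReductions A E S) (hES : E ⊆ Set.Iic S) (hr : IsAtom r)
    (hle : ∀ p ≤ S, IsAtom p → p ≠ r → r ≤ A p) : E \ {⊥} = Set.Icc (r ⊔ A r) S := by
  ext D
  simp only [Set.mem_sdiff, Set.mem_singleton_iff, Set.mem_Icc, sup_le_iff]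
  constructor
  · rintro ⟨hD, hD0⟩
    have hDS : D ≤ S := hES hD
    obtain ⟨p, hp, hpD⟩ := (eq_bot_or_exists_atom_le D).resolve_left hD0
    have hrD : r ≤ D := by
      obtain rfl | hpr := eq_or_ne p r
      · exact hpD
      · exact (hle p (hpD.trans hDS) hp hpr).trans ((hA.mem_iff hp hpD hDS).1 hD)
    exact ⟨⟨hrD, (hA.mem_iff hr hrD hDS).1 hD⟩, hDS⟩
  · rintro ⟨⟨hrD, hArD⟩, hDS⟩
    exact ⟨(hA.mem_iff hr hrD hDS).2 hArD, ne_bot_of_le_ne_bot hr.ne_bot hrD⟩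

theorem sdiff_bot_eq_Iic_sdiff_bot (hA : GeneratesReductions A E S) (hES : E ⊆ Set.Iic S)
    (hbot : ∀ p ≤ S, IsAtom p → A p = ⊥) : E \ {⊥} = Set.Iic S \ {⊥} := by
  refine (Set.sdiff_subset_sdiff_left hES).antisymm ?_
  rintro D ⟨hDS, hD0⟩
  obtain ⟨p, hp, hpD⟩ := (eq_bot_or_exists_atom_le D).resolve_left hD0
  refine ⟨(hA.mem_iff hp hpD hDS).2 ?_, hD0⟩
  rw [hbot p (hpD.trans hDS) hp]
  exact bot_le

end GeneratesReductions

theorem filter_of_reductions_filters_general [IsAtomic L] (hES : E ⊆ Set.Iic S)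
    (hA : GeneratesReductions A E S) :
    (∃ p ≤ S, IsAtom p ∧ (∀ q ≤ S, IsAtom q → q ≠ p → p ≤ A q) ∧
      (E = Set.Icc (p ⊔ A p) S ∨ E = insert ⊥ (Set.Icc (p ⊔ A p) S))) ∨
    ((∀ p ≤ S, IsAtom p → A p = ⊥) ∧ (E = Set.Iic S ∨ E = Set.Iic S \ {⊥})) := by
  by_cases hbot : ∀ p ≤ S, IsAtom p → A p = ⊥
  · have hE := eq_or_eq_insert_of_sdiff_singleton_eq (hA.sdiff_bot_eq_Iic_sdiff_bot hES hbot)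
    rw [Set.insert_sdiff_self_of_mem (Set.mem_Iic.2 bot_le)] at hE
    exact .inr ⟨hbot, hE.symm⟩
  · push Not at hbot
    obtain ⟨q, hqS, hq, hAq⟩ := hbot
    obtain ⟨r, hr, hrq⟩ := (eq_bot_or_exists_atom_le (A q)).resolve_left hAq
    have hrS : r ≤ S := hrq.trans ((hA.generator_le q hqS hq).trans sdiff_le)
    have hle : ∀ p ≤ S, IsAtom p → p ≠ r → r ≤ A p := fun p hpS hp =>
      hA.atom_le_generator_of_ne hp hpS hq hqS hr hrq
    exact .inl ⟨r, hrS, hr, hle,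
      eq_or_eq_insert_of_sdiff_singleton_eq (hA.sdiff_bot_eq_Icc hES hr hle)⟩

end Reductions

section Finset

variable {α : Type*}

theorem exists_isAtom_le_finset_iff {S : Finset α} {P : Finset α → Prop} :
    (∃ p ≤ S, IsAtom p ∧ P p) ↔ ∃ p ∈ S, P {p} := by
  simp only [Finset.isAtom_iff]
  constructor
  · rintro ⟨_, hpS, ⟨p, rfl⟩, hp⟩
    exact ⟨p, singleton_subset_iff.1 hpS, hp⟩
  · rintro ⟨p, hpS, hp⟩
    exact ⟨{p}, singleton_subset_iff.2 hpS, ⟨p, rfl⟩, hp⟩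

theorem forall_isAtom_le_finset_iff {S : Finset α} {P : Finset α → Prop} :
    (∀ p ≤ S, IsAtom p → P p) ↔ ∀ p ∈ S, P {p} := by
  simpa using (exists_isAtom_le_finset_iff (S := S) (P := fun p => ¬ P p)).not

variable [DecidableEq α]

theorem coe_reducedColl (E : Finset (Finset α)) (p : α) :
    (reducedColl E p : Set (Finset α)) = reducedFamily ↑E {p} := by
  simp [reducedColl, reducedFamily, erase_eq]

-- A function on points extends to all of `Finset α` by unions, taking its old values at singletons.
theorem generatesReductions_biUnion {S : Finset α} {E : Finset (Finset α)} {A : α → Finset α}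
    (hA : ∀ p ∈ S, A p ⊆ S.erase p)
    (hfilter : ∀ p ∈ S,
      reducedColl E p = (S.erase p).powerset.filter (fun D => A p ⊆ D)) :
    GeneratesReductions (fun D => D.biUnion A) (E : Set (Finset α)) S where
  generator_le := forall_isAtom_le_finset_iff.2 (by simpa [← erase_eq] using hA)
  reducedFamily_eq := forall_isAtom_le_finset_iff.2 fun p hp => by
    rw [← coe_reducedColl, hfilter p hp, singleton_biUnion, ← erase_eq, ← Icc_eq_filter_powerset,
      coe_Icc]

end Finset

/-- Suppose every `p ∈ S` lies in some member of `E` and every reduced collection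
`E_p` is a filter in `S \ {p}` generated by `A_p ⊆ S \ {p}`. Then either there exists
`p ∈ S` with `p ∈ A_q` for all `q ≠ p`, in which case `E` is the filter in `S` generated
by `{p} ∪ A_p` or this filter together with `∅`; or `A_p = ∅` for all `p ∈ S`, in which
case `E = P(S)` or `E = P(S) \ {∅}`. -/
theorem filter_of_reductions_filters {α : Type*} [DecidableEq α]
    (S : Finset α) (E : Finset (Finset α)) (hES : ∀ D ∈ E, D ⊆ S)
    (hcover : ∀ p ∈ S, ∃ D ∈ E, p ∈ D)
    (A : α → Finset α) (hA : ∀ p ∈ S, A p ⊆ S.erase p)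
    (hfilter : ∀ p ∈ S,
      reducedColl E p = (S.erase p).powerset.filter (fun D => A p ⊆ D)) :
    (∃ p ∈ S, (∀ q ∈ S, q ≠ p → p ∈ A q) ∧
      (E = S.powerset.filter (fun D => insert p (A p) ⊆ D) ∨
        E = insert ∅ (S.powerset.filter (fun D => insert p (A p) ⊆ D)))) ∨
    ((∀ p ∈ S, A p = ∅) ∧ (E = S.powerset ∨ E = S.powerset.erase ∅)) := by
  simpa [exists_isAtom_le_finset_iff, forall_isAtom_le_finset_iff, ← coe_Icc, ← coe_Iic,
    ← coe_insert, ← coe_erase, Icc_eq_filter_powerset, Iic_eq_powerset, -coe_filter,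
    -coe_powerset] using
    filter_of_reductions_filters_general hES (generatesReductions_biUnion hA hfilter)
end

section
/- Let U be a non-empty finite set of complex roots of unity with ζ^N = 1 for all ζ ∈ U, and suppose that a_k = Σ_{ζ∈U} ζ^k is a non-negative integer for every natural number k. Then U is invariant under the Galois action: if ζ ∈ U and ζ' is a root of unity having the same multiplicative order as ζ, then ζ' ∈ U. Moreover, a_k = a_{k'} whenever gcd(k, N) = gcd(k', N). -/
/-!
Fourier inversion on the `N`-th roots of unity shows that the rational polynomial
`P = ∑ k < N, a_k X ^ k` takes the value `N` at `z⁻¹` when `z ∈ U`, and `0` at the inverses of the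
other `N`-th roots of unity. Roots of unity of the same order are conjugate over `ℚ`, because they
share the cyclotomic minimal polynomial, so `P` takes the same rational value at both. Hence `U` is
closed under equality of orders.

For `u` prime to `N`, the map `ζ ↦ ζ ^ u` preserves orders, so it permutes `U`. Since
`k ≡ u * gcd(k, N)` modulo `N` for some such `u`, it follows that `a_k = a_{gcd(k, N)}`.
-/

open Polynomial

theorem orderOf_inv_eq_orderOf {G : Type*} [DivisionMonoid G] (x : G) :
    orderOf x⁻¹ = orderOf x := by
  simp [orderOf_eq_orderOf_iff]

section Conjugates

theorem isConjRoot_rat_of_orderOf_eq {K : Type*} [Field K] [CharZero K] {x y : K}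
    (hx : IsOfFinOrder x) (hxy : orderOf x = orderOf y) : IsConjRoot ℚ x y := by
  have hy : 0 < orderOf y := hxy ▸ hx.orderOf_pos
  rw [isConjRoot_def, ← cyclotomic_eq_minpoly_rat (IsPrimitiveRoot.orderOf x) hx.orderOf_pos,
    ← cyclotomic_eq_minpoly_rat (IsPrimitiveRoot.orderOf y) hy, hxy]

theorem aeval_eq_algebraMap_of_isConjRoot {F A : Type*} [Field F] [Ring A] [Algebra F A] {x y : A}
    (hxy : IsConjRoot F x y) {p : F[X]} {c : F} (hp : aeval x p = algebraMap F A c) :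
    aeval y p = algebraMap F A c := by
  have hdvd : minpoly F y ∣ p - C c := by
    rw [← isConjRoot_def.mp hxy]
    exact minpoly.dvd F x (by simp [hp])
  simpa [sub_eq_zero] using aeval_eq_zero_of_dvd_aeval_eq_zero hdvd (minpoly.aeval F y)

end Conjugates

section FourierInversion

theorem geom_sum_eq_ite_of_pow_eq_one {R : Type*} [Ring R] [NoZeroDivisors R] [DecidableEq R]
    {N : ℕ} {w : R} (hw : w ^ N = 1) :
    ∑ k ∈ Finset.range N, w ^ k = if w = 1 then (N : R) else 0 := by
  split_ifs with h
  · simp [h]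
  · have hmul : (w - 1) * ∑ k ∈ Finset.range N, w ^ k = 0 := by rw [mul_geom_sum, hw, sub_self]
    exact (mul_eq_zero.mp hmul).resolve_left (sub_ne_zero.mpr h)

theorem sum_range_sum_pow_mul_inv_pow {K : Type*} [Field K] [DecidableEq K] {N : ℕ} (hN : N ≠ 0)
    {U : Finset K} (hroots : ∀ ζ ∈ U, ζ ^ N = 1) {z : K} (hz : z ^ N = 1) :
    ∑ k ∈ Finset.range N, (∑ ζ ∈ U, ζ ^ k) * z⁻¹ ^ k = if z ∈ U then (N : K) else 0 := by
  have hz0 : z ≠ 0 := (IsUnit.of_pow_eq_one hz hN).ne_zero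
  calc ∑ k ∈ Finset.range N, (∑ ζ ∈ U, ζ ^ k) * z⁻¹ ^ k
      = ∑ ζ ∈ U, ∑ k ∈ Finset.range N, (ζ * z⁻¹) ^ k := by
        simp_rw [Finset.sum_mul, mul_pow]
        exact Finset.sum_comm
    _ = ∑ ζ ∈ U, if z = ζ then (N : K) else 0 := Finset.sum_congr rfl fun ζ hζ => by
        have hw : (ζ * z⁻¹) ^ N = 1 := by rw [mul_pow, inv_pow, hroots ζ hζ, hz, inv_one, mul_one]
        simp only [geom_sum_eq_ite_of_pow_eq_one hw, mul_inv_eq_one₀ hz0, eq_comm]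
    _ = if z ∈ U then (N : K) else 0 := Finset.sum_ite_eq U z _

end FourierInversion

theorem mem_of_orderOf_eq_of_sum_pow_rat {K : Type*} [Field K] [CharZero K] {N : ℕ} (hN : N ≠ 0)
    {U : Finset K} (hroots : ∀ ζ ∈ U, ζ ^ N = 1) (ha : ∀ k : ℕ, ∃ a : ℚ, ∑ ζ ∈ U, ζ ^ k = (a : K))
    {ζ ζ' : K} (hζ : ζ ∈ U) (hord : orderOf ζ' = orderOf ζ) : ζ' ∈ U := by
  classical
  choose a ha using ha
  let P : ℚ[X] := ∑ k ∈ Finset.range N, C (a k) * X ^ k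
  have hP {z : K} (hz : z ^ N = 1) : aeval z⁻¹ P = if z ∈ U then (N : K) else 0 := by
    simp [P, ← sum_range_sum_pow_mul_inv_pow hN hroots hz, ha]
  have hζN : ζ ^ N = 1 := hroots ζ hζ
  have hζ'N : ζ' ^ N = 1 := orderOf_dvd_iff_pow_eq_one.mp (hord ▸ orderOf_dvd_of_pow_eq_one hζN)
  have hfin : IsOfFinOrder ζ := isOfFinOrder_iff_pow_eq_one.mpr ⟨N, Nat.pos_of_ne_zero hN, hζN⟩
  have hconj : IsConjRoot ℚ ζ⁻¹ ζ'⁻¹ := by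
    have hfin' : IsOfFinOrder ζ⁻¹ := by
      rwa [← orderOf_pos_iff, orderOf_inv_eq_orderOf, orderOf_pos_iff]
    exact isConjRoot_rat_of_orderOf_eq hfin'
      (by rw [orderOf_inv_eq_orderOf, orderOf_inv_eq_orderOf, hord])
  have hval : aeval ζ'⁻¹ P = (N : K) := by
    simpa using aeval_eq_algebraMap_of_isConjRoot hconj (c := (N : ℚ)) (by simp [hP hζN, hζ])
  by_contra hmem
  rw [hP hζ'N, if_neg hmem] at hval
  exact hN (Nat.cast_eq_zero.mp hval.symm)

section PowerMap

theorem image_pow_eq_self_of_coprime {M : Type*} [Monoid M] [DecidableEq M] {U : Finset M}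
    (hU : ∀ ζ ∈ U, ∀ ζ', orderOf ζ' = orderOf ζ → ζ' ∈ U) {u : ℕ}
    (hu : ∀ ζ ∈ U, u.Coprime (orderOf ζ)) : U.image (· ^ u) = U := by
  refine (Finset.eq_of_subset_of_card_le (fun ζ hζ => ?_) Finset.card_image_le).symm
  obtain ⟨m, hm⟩ := exists_pow_eq_self_of_coprime (hu ζ hζ)
  have hroot : (ζ ^ m) ^ u = ζ := by rw [← pow_mul, mul_comm, pow_mul, hm]
  have hord : orderOf (ζ ^ m) = orderOf ζ := by
    refine Nat.dvd_antisymm (orderOf_pow_dvd m) ?_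
    conv_lhs => rw [← hroot]
    exact orderOf_pow_dvd u
  exact Finset.mem_image.mpr ⟨ζ ^ m, hU ζ hζ _ hord, hroot⟩

theorem sum_comp_pow_eq_of_coprime {M A : Type*} [Monoid M] [AddCommMonoid A] {U : Finset M}
    (hU : ∀ ζ ∈ U, ∀ ζ', orderOf ζ' = orderOf ζ → ζ' ∈ U) {u : ℕ}
    (hu : ∀ ζ ∈ U, u.Coprime (orderOf ζ)) (f : M → A) :
    ∑ ζ ∈ U, f (ζ ^ u) = ∑ ζ ∈ U, f ζ := by
  classical
  have himage : U.image (· ^ u) = U := image_pow_eq_self_of_coprime hU hu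
  have hinj : Set.InjOn (· ^ u) (U : Set M) := Finset.card_image_iff.mp (by rw [himage])
  rw [← Finset.sum_image (f := f) hinj, himage]

theorem exists_coprime_modEq_mul_gcd (k N : ℕ) :
    ∃ u : ℕ, u.Coprime N ∧ k ≡ u * k.gcd N [MOD N] := by
  rcases eq_or_ne N 0 with rfl | hN
  · exact ⟨1, by simp, by simp [Nat.ModEq.refl]⟩
  have : NeZero N := ⟨hN⟩
  obtain ⟨d, hdN, u, hu, hk⟩ := ZMod.eq_unit_mul_divisor (k : ZMod N)
  have hcop : u.val.Coprime N := by rwa [← ZMod.isUnit_iff_coprime, ZMod.natCast_zmod_val]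
  have hmod : k ≡ u.val * d [MOD N] := by
    rw [← ZMod.natCast_eq_natCast_iff, Nat.cast_mul, ZMod.natCast_zmod_val, hk]
  have hgcd : k.gcd N = d := by
    rw [hmod.gcd_eq, hcop.gcd_mul_left_cancel, Nat.gcd_eq_left hdN]
  exact ⟨u.val, hcop, hgcd ▸ hmod⟩

theorem sum_pow_eq_sum_pow_gcd {R : Type*} [Semiring R] {N : ℕ} {U : Finset R}
    (hroots : ∀ ζ ∈ U, ζ ^ N = 1) (hU : ∀ ζ ∈ U, ∀ ζ', orderOf ζ' = orderOf ζ → ζ' ∈ U) (k : ℕ) :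
    ∑ ζ ∈ U, ζ ^ k = ∑ ζ ∈ U, ζ ^ k.gcd N := by
  obtain ⟨u, hu, hk⟩ := exists_coprime_modEq_mul_gcd k N
  calc ∑ ζ ∈ U, ζ ^ k = ∑ ζ ∈ U, (ζ ^ u) ^ k.gcd N := Finset.sum_congr rfl fun ζ hζ => by
        rw [← pow_mul, pow_eq_pow_of_modEq hk (hroots ζ hζ)]
    _ = ∑ ζ ∈ U, ζ ^ k.gcd N := sum_comp_pow_eq_of_coprime hU
        (fun ζ hζ => hu.coprime_dvd_right (orderOf_dvd_of_pow_eq_one (hroots ζ hζ))) (· ^ k.gcd N)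

end PowerMap

theorem galois_invariance_of_power_sums_general {K : Type*} [Field K] [CharZero K] {N : ℕ}
    (hN : N ≠ 0) {U : Finset K} (hroots : ∀ ζ ∈ U, ζ ^ N = 1)
    (ha : ∀ k : ℕ, ∃ a : ℚ, ∑ ζ ∈ U, ζ ^ k = (a : K)) :
    (∀ ζ ∈ U, ∀ ζ' : K, orderOf ζ' = orderOf ζ → ζ' ∈ U) ∧
    (∀ k k' : ℕ, k.gcd N = k'.gcd N → ∑ ζ ∈ U, ζ ^ k = ∑ ζ ∈ U, ζ ^ k') := by
  have hU : ∀ ζ ∈ U, ∀ ζ' : K, orderOf ζ' = orderOf ζ → ζ' ∈ U :=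
    fun _ hζ _ => mem_of_orderOf_eq_of_sum_pow_rat hN hroots ha hζ
  refine ⟨hU, fun k k' hk => ?_⟩
  rw [sum_pow_eq_sum_pow_gcd hroots hU k, hk, ← sum_pow_eq_sum_pow_gcd hroots hU k']

/-- Let `U` be a nonempty finite set of complex roots of unity, all satisfying `ζ ^ N = 1`,
whose power sums `a_k = ∑ ζ ∈ U, ζ ^ k` are all non-negative integers. Then `U` is invariant
under the Galois action: any root of unity with the same multiplicative order as some
element of `U` also lies in `U`; and `a_k` only depends on `gcd(k, N)`. -/
theorem galois_invariance_of_power_sums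
    (N : ℕ) (hN : 0 < N) (U : Finset ℂ) (hU : U.Nonempty)
    (hroots : ∀ ζ ∈ U, ζ ^ N = 1)
    (ha : ∀ k : ℕ, ∃ a : ℕ, (∑ ζ ∈ U, ζ ^ k) = (a : ℂ)) :
    (∀ ζ ∈ U, ∀ ζ' : ℂ, (∃ m : ℕ, 0 < m ∧ ζ' ^ m = 1) →
      orderOf ζ' = orderOf ζ → ζ' ∈ U) ∧
    (∀ k k' : ℕ, Nat.gcd k N = Nat.gcd k' N →
      (∑ ζ ∈ U, ζ ^ k) = ∑ ζ ∈ U, ζ ^ k') := by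
  obtain ⟨hinv, hgcd⟩ := galois_invariance_of_power_sums_general hN.ne' hroots
    fun k => (ha k).imp' Nat.cast fun a h => by rw [h, Rat.cast_natCast]
  exact ⟨fun ζ hζ ζ' _ => hinv ζ hζ ζ', hgcd⟩
end

section
/- Let U be a finite set of complex roots of unity such that Σ_{ζ∈U} ζ^k is an integer for every positive integer k. Then the polynomial p(X) = Π_{ζ∈U} (X − ζ) has integer coefficients. -/
/-!
By Newton's identities, `k * e_k` is an integral polynomial in the `e_i` with `i < k` and the
power sums `p_j` with `1 ≤ j ≤ k`. Dividing by `k`, induction shows that the elementary symmetric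
functions of `U`, hence by Vieta the coefficients of `∏ (X - ζ)`, are rational. They are also
algebraic integers, being polynomial expressions in roots of unity, and a rational algebraic
integer is an integer.
-/

open Polynomial

lemma multiset_esymm_mem {A σ : Type*} [CommSemiring A] [SetLike σ A] [SubsemiringClass σ A]
    {S : σ} {s : Multiset A} (hs : ∀ a ∈ s, a ∈ S) (k : ℕ) : s.esymm k ∈ S := by
  refine multiset_sum_mem _ fun b hb ↦ ?_
  obtain ⟨t, ht, rfl⟩ := Multiset.mem_map.mp hb
  exact multiset_prod_mem _ fun a ha ↦
    hs a (Multiset.mem_of_le (Multiset.mem_powersetCard.mp ht).1 ha)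

section ElementarySymmetric

variable {A : Type*} [CommRing A]

lemma mul_multiset_esymm_eq_sum (s : Multiset A) (k : ℕ) :
    k * s.esymm k = (-1) ^ (k + 1) * ∑ a ∈ Finset.HasAntidiagonal.antidiagonal k with a.1 < k,
      (-1) ^ a.1 * s.esymm a.1 * (s.map (· ^ a.2)).sum := by
  classical
  have esymm_eq (j : ℕ) : MvPolynomial.aeval (fun i : s ↦ i.1) (MvPolynomial.esymm s ℤ j) =
      s.esymm j := by
    rw [MvPolynomial.aeval_esymm_eq_multiset_esymm, Multiset.map_univ_coe]
  have psum_eq (j : ℕ) : MvPolynomial.aeval (fun i : s ↦ i.1) (MvPolynomial.psum s ℤ j) =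
      (s.map (· ^ j)).sum := by
    simp only [MvPolynomial.psum, map_sum, map_pow, MvPolynomial.aeval_X]
    exact congrArg Multiset.sum (Multiset.map_univ s (· ^ j))
  have newton := congrArg (MvPolynomial.aeval fun i : s ↦ i.1)
    (MvPolynomial.mul_esymm_eq_sum s ℤ k)
  simpa only [map_mul, map_sum, map_pow, map_neg, map_one, map_natCast, esymm_eq, psum_eq]
    using newton

lemma multiset_esymm_mem_of_forall_sum_pow_mem {K : Type*} [Field K] [CharZero K] [Algebra K A]
    (S : Subalgebra K A) {s : Multiset A} (hs : ∀ k, 0 < k → (s.map (· ^ k)).sum ∈ S) (k : ℕ) :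
    s.esymm k ∈ S := by
  induction k using Nat.strong_induction_on with
  | _ k ih =>
    obtain rfl | hk := Nat.eq_zero_or_pos k
    · simp only [Multiset.esymm, Multiset.powersetCard_zero_left, Multiset.map_singleton,
        Multiset.prod_zero, Multiset.sum_singleton, one_mem]
    have neg_one_pow_mem (j : ℕ) : (-1 : A) ^ j ∈ S := pow_mem (neg_mem (one_mem S)) j
    have mul_mem_S : (k : A) * s.esymm k ∈ S := by
      rw [mul_multiset_esymm_eq_sum]
      refine mul_mem (neg_one_pow_mem _) (sum_mem fun a ha ↦ ?_)
      obtain ⟨hsum, hlt⟩ := Finset.mem_filter.mp ha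
      have hpos : 0 < a.2 := by
        have := Finset.HasAntidiagonal.mem_antidiagonal.mp hsum
        lia
      exact mul_mem (mul_mem (neg_one_pow_mem _) (ih a.1 hlt)) (hs a.2 hpos)
    have smul_mem_S : (k : K) • s.esymm k ∈ S.toSubmodule := by
      rwa [Nat.cast_smul_eq_nsmul, nsmul_eq_mul]
    exact (S.toSubmodule.smul_mem_iff (Nat.cast_ne_zero.mpr hk.ne')).mp smul_mem_S

lemma coeff_multiset_prod_X_sub_C_mem {σ : Type*} [SetLike σ A] [SubringClass σ A] {S : σ}
    {s : Multiset A} (hs : ∀ k, s.esymm k ∈ S) (n : ℕ) :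
    (s.map fun a ↦ X - C a).prod.coeff n ∈ S := by
  obtain hn | hn := le_or_gt n s.card
  · rw [Multiset.prod_X_sub_C_coeff s hn]
    exact mul_mem (pow_mem (neg_mem (one_mem S)) _) (hs _)
  · nontriviality A
    rw [coeff_eq_zero_of_natDegree_lt (by rwa [natDegree_multiset_prod_X_sub_C_eq_card])]
    exact zero_mem S

end ElementarySymmetric

lemma isIntegral_coeff_multiset_prod_X_sub_C {R A : Type*} [CommRing R] [CommRing A] [Algebra R A]
    {s : Multiset A} (hs : ∀ a ∈ s, IsIntegral R a) (n : ℕ) :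
    IsIntegral R ((s.map fun a ↦ X - C a).prod.coeff n) :=
  coeff_multiset_prod_X_sub_C_mem (S := integralClosure R A) (multiset_esymm_mem hs) n

theorem prod_X_sub_C_int_coeffs_general {R K A : Type*} [CommRing R] [Field K] [CharZero K]
    [CommRing A] [Nontrivial A] [Algebra R K] [Algebra K A] [Algebra R A] [IsScalarTower R K A]
    [IsIntegrallyClosedIn R K] {s : Multiset A} (hint : ∀ a ∈ s, IsIntegral R a)
    (hsum : ∀ k, 0 < k → (s.map (· ^ k)).sum ∈ (algebraMap K A).range) :
    (s.map fun a ↦ X - C a).prod ∈ lifts (algebraMap R A) := by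
  refine (lifts_iff_coeff_lifts _).mpr fun n ↦ ?_
  have coeff_mem : (s.map fun a ↦ X - C a).prod.coeff n ∈ (⊥ : Subalgebra K A) :=
    coeff_multiset_prod_X_sub_C_mem (multiset_esymm_mem_of_forall_sum_pow_mem ⊥ hsum) n
  obtain ⟨q, hq⟩ := Algebra.mem_bot.mp coeff_mem
  have q_integral : IsIntegral R q := by
    rw [← isIntegral_algebraMap_iff (algebraMap K A).injective, hq]
    exact isIntegral_coeff_multiset_prod_X_sub_C hint n
  obtain ⟨r, rfl⟩ := IsIntegrallyClosedIn.isIntegral_iff.mp q_integral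
  exact ⟨r, by rw [IsScalarTower.algebraMap_apply R K A, hq]⟩

/-- If `U` is a finite set of complex roots of unity all of whose power sums
`∑ ζ ∈ U, ζ ^ k` (for `k ≥ 1`) are integers, then the polynomial `∏ ζ ∈ U, (X − ζ)` has
integer coefficients. -/
theorem prod_X_sub_C_int_coeffs
    (U : Finset ℂ) (hroots : ∀ ζ ∈ U, ∃ m : ℕ, 0 < m ∧ ζ ^ m = 1)
    (ha : ∀ k : ℕ, 0 < k → ∃ a : ℤ, (∑ ζ ∈ U, ζ ^ k) = (a : ℂ)) :
    ∀ n : ℕ, ∃ z : ℤ, (∏ ζ ∈ U, (X - C ζ)).coeff n = (z : ℂ) := by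
  have lifts_int := prod_X_sub_C_int_coeffs_general (R := ℤ) (K := ℚ) (s := U.val)
    (fun ζ hζ ↦ let ⟨_, hm, hζm⟩ := hroots ζ hζ; .of_pow hm (hζm ▸ isIntegral_one))
    (fun k hk ↦ let ⟨a, hak⟩ := ha k hk; ⟨a, (map_intCast _ a).trans hak.symm⟩)
  exact fun n ↦ ((lifts_iff_coeff_lifts _).mp lifts_int n).imp fun _ ↦ Eq.symm
end

section
/- Let N be a positive integer, ξ = exp(2πi/N) a primitive N-th root of unity, and let d and c be positive divisors of N. Then Σ_{i=1,...,N with gcd(i,N)=d} ξ^{ic} = (φ(N/d) / φ(N/gcd(N,dc))) · μ(N/gcd(N,dc)), where φ is Euler's totient function and μ is the Möbius function. -/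
open Finset

/-!
If `ξ` is a primitive `N`-th root of unity, the powers `ξ ^ i` with `1 ≤ i ≤ N` and `gcd i N = d`
are exactly the primitive `n`-th roots of unity for `n = N / d`, each occurring once, so the sum is
the Ramanujan sum `∑ z ^ c` over these roots `z`.

Put `m = n / gcd n c`. Fixing one primitive `n`-th root `ζ` identifies the primitive `n`-th roots
with `(ℤ/n)ˣ`, via `u ↦ ζ ^ u`. Since `ζ ^ c` is a primitive `m`-th root, `(ζ ^ c) ^ u` depends only
on the image of `u` in `(ℤ/m)ˣ`. The reduction `(ℤ/n)ˣ → (ℤ/m)ˣ` is a surjective homomorphism, so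
all its fibres have `φ(n) / φ(m)` elements, and the sum is `φ(n) / φ(m)` times the sum of the
primitive `m`-th roots of unity. The latter is `μ(m)`, by Möbius inversion from the vanishing of the
sum of all `k`-th roots of unity for `k > 1`.
-/

section RamanujanSum

open scoped Nat ArithmeticFunction.Moebius

variable {R M : Type*} [CommRing R] [IsDomain R] [AddCommMonoid M] {n m : ℕ} {ζ : R}

lemma sum_comp_monoidHom_of_surjective {G H : Type*} [Group G] [Fintype G] [Group H] [Fintype H]
    {f : G →* H} (hf : Function.Surjective f) (g : H → M) :
    ∑ x, g (f x) = Nat.card f.ker • ∑ y, g y := by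
  classical
  have card_fiber (y : H) : #{x | f x = y} = Nat.card f.ker := by
    rw [MonoidHom.card_fiber_eq_of_mem_range f (hf y) (hf 1), ← Fintype.card_subtype,
      ← Nat.card_eq_fintype_card]
    rfl
  calc ∑ x, g (f x) = ∑ y, ∑ x with f x = y, g y := (sum_fiberwise' univ f g).symm
    _ = Nat.card f.ker • ∑ y, g y := by simp only [sum_const, card_fiber, smul_sum]

lemma card_ker_unitsMap [NeZero n] (h : m ∣ n) :
    Nat.card (ZMod.unitsMap h).ker = φ n / φ m := by
  have : NeZero m := ⟨ne_zero_of_dvd_ne_zero (NeZero.ne n) h⟩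
  have hindex : (ZMod.unitsMap h).ker.index = φ m := by
    rw [Subgroup.index_ker, MonoidHom.range_eq_top.2 (ZMod.unitsMap_surjective h),
      Subgroup.card_top, Nat.card_eq_fintype_card, ZMod.card_units_eq_totient]
  have hmul := (ZMod.unitsMap h).ker.card_mul_index
  rw [hindex, Nat.card_eq_fintype_card (α := (ZMod n)ˣ), ZMod.card_units_eq_totient] at hmul
  exact Nat.eq_div_of_mul_eq_left (Nat.totient_pos.2 (NeZero.pos m)).ne' hmul

lemma sum_comp_unitsMap [NeZero n] [NeZero m] (h : m ∣ n) (g : (ZMod m)ˣ → M) :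
    ∑ u, g (ZMod.unitsMap h u) = (φ n / φ m) • ∑ v, g v := by
  rw [sum_comp_monoidHom_of_surjective (ZMod.unitsMap_surjective h), card_ker_unitsMap]

lemma isPrimitiveRoot_pow_div_gcd {A : Type*} [CommMonoid A] {a : A} [NeZero n]
    (ha : IsPrimitiveRoot a n) (c : ℕ) : IsPrimitiveRoot (a ^ c) (n / n.gcd c) := by
  rw [IsPrimitiveRoot.iff_orderOf, (ha.isOfFinOrder (NeZero.ne n)).orderOf_pow, ← ha.eq_orderOf]

lemma bijOn_pow_Icc_nthRootsFinset (hζ : IsPrimitiveRoot ζ n) :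
    Set.BijOn (ζ ^ ·) (Icc 1 n) (Polynomial.nthRootsFinset n (1 : R)) := by
  rcases n.eq_zero_or_pos with rfl | hn
  · simp
  have : NeZero n := ⟨hn.ne'⟩
  simp only [Set.BijOn, Set.MapsTo, Set.InjOn, Set.SurjOn, Set.subset_def, mem_coe, mem_Icc,
    Polynomial.mem_nthRootsFinset hn, Set.mem_image]
  refine ⟨fun i _ => ?_, fun i hi j hj hij => ?_, fun z hz => ?_⟩
  · rw [pow_right_comm, hζ.pow_eq_one, one_pow]
  · obtain ⟨i, rfl⟩ := Nat.exists_eq_add_of_le' hi.1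
    obtain ⟨j, rfl⟩ := Nat.exists_eq_add_of_le' hj.1
    simp only [pow_succ] at hij
    rw [hζ.pow_inj hi.2 hj.2 (mul_right_cancel₀ (hζ.ne_zero hn.ne') hij)]
  · obtain ⟨i, hi, rfl⟩ := hζ.eq_pow_of_pow_eq_one hz
    -- The exponent `0` is represented by `n`.
    rcases i.eq_zero_or_pos with rfl | hi0
    · exact ⟨n, ⟨hn, le_rfl⟩, by rw [hζ.pow_eq_one, pow_zero]⟩
    · exact ⟨i, ⟨hi0, hi.le⟩, rfl⟩

lemma sum_nthRootsFinset_one (hζ : IsPrimitiveRoot ζ n) :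
    ∑ z ∈ Polynomial.nthRootsFinset n (1 : R), z = if n = 1 then 1 else 0 := by
  have hbij := bijOn_pow_Icc_nthRootsFinset hζ
  have hgeom : ∑ z ∈ Polynomial.nthRootsFinset n (1 : R), z = ζ * ∑ i ∈ range n, ζ ^ i := by
    rw [← sum_nbij (ζ ^ ·) hbij.mapsTo hbij.injOn hbij.surjOn fun _ _ => rfl,
      ← Ico_add_one_right_eq_Icc, sum_Ico_eq_sum_range, mul_sum]
    simp only [pow_add, pow_one, add_tsub_cancel_right]
  rw [hgeom]
  rcases Nat.lt_trichotomy n 1 with h | rfl | h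
  · simp [Nat.lt_one_iff.1 h]
  · simp [IsPrimitiveRoot.one_right_iff.1 hζ]
  · rw [hζ.geom_sum_eq_zero h, mul_zero, if_neg h.ne']

lemma sum_divisors_sum_primitiveRoots (n : ℕ) (f : R → M) :
    ∑ k ∈ n.divisors, ∑ z ∈ primitiveRoots k R, f z
      = ∑ z ∈ Polynomial.nthRootsFinset n (1 : R), f z := by
  classical
  rw [IsPrimitiveRoot.nthRoots_one_eq_biUnion_primitiveRoots,
    sum_biUnion fun _ _ _ _ hij => IsPrimitiveRoot.disjoint hij]

lemma sum_primitiveRoots_eq_moebius (hζ : IsPrimitiveRoot ζ n) :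
    ∑ z ∈ primitiveRoots n R, z = (μ n : R) := by
  rcases n.eq_zero_or_pos with rfl | hn
  · simp
  have sum_divisors : ∀ k > 0, k ∈ {k | k ∣ n} →
      ∑ j ∈ k.divisors, ∑ z ∈ primitiveRoots j R, z = if k = 1 then 1 else 0 := by
    rintro k - ⟨a, hka⟩
    rw [sum_divisors_sum_primitiveRoots,
      sum_nthRootsFinset_one (hζ.pow hn (hka.trans (mul_comm k a)))]
  -- `R` need not contain primitive `k`-th roots for other `k`, hence inversion on divisors of `n`.
  have inversion := (ArithmeticFunction.sum_eq_iff_sum_smul_moebius_eq_on {k | k ∣ n}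
    fun _ _ => dvd_trans).1 sum_divisors n hn dvd_rfl
  rw [← inversion, sum_eq_single (n, 1)]
  · simp
  · rintro ⟨a, b⟩ hab hne
    have hb : b ≠ 1 := by
      rintro rfl
      simp_all
    rw [if_neg hb, smul_zero]
  · simp [hn.ne']

lemma sum_primitiveRoots_eq_sum_units [NeZero n] (hζ : IsPrimitiveRoot ζ n) (f : R → M) :
    ∑ z ∈ primitiveRoots n R, f z = ∑ u : (ZMod n)ˣ, f (ζ ^ (u : ZMod n).val) := by
  symm
  refine sum_bij (fun u _ => ζ ^ (u : ZMod n).val) ?_ ?_ ?_ fun _ _ => rfl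
  · intro u _
    rw [mem_primitiveRoots (NeZero.pos n)]
    exact hζ.pow_of_coprime _ (ZMod.val_coe_unit_coprime u)
  · intro u _ v _ huv
    exact Units.ext (ZMod.val_injective n (hζ.pow_inj (ZMod.val_lt _) (ZMod.val_lt _) huv))
  · intro z hz
    rw [mem_primitiveRoots (NeZero.pos n), hζ.isPrimitiveRoot_iff] at hz
    obtain ⟨i, hi, hin, rfl⟩ := hz
    refine ⟨ZMod.unitOfCoprime i hin, mem_univ _, ?_⟩
    rw [ZMod.coe_unitOfCoprime, ZMod.val_cast_of_lt hi]

lemma pow_val_unitsMap {A : Type*} [Monoid A] {a : A} [NeZero n] (h : m ∣ n) (ha : a ^ m = 1)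
    (u : (ZMod n)ˣ) : a ^ (ZMod.unitsMap h u : ZMod m).val = a ^ (u : ZMod n).val := by
  rw [ZMod.unitsMap_val, ZMod.cast_eq_val, ZMod.val_natCast, ← pow_eq_pow_mod _ ha]

lemma sum_primitiveRoots_pow [NeZero n] (hζ : IsPrimitiveRoot ζ n) (c : ℕ) :
    ∑ z ∈ primitiveRoots n R, z ^ c = (φ n / φ (n / n.gcd c)) • (μ (n / n.gcd c) : R) := by
  have hη := isPrimitiveRoot_pow_div_gcd hζ c
  have hmn : n / n.gcd c ∣ n := Nat.div_dvd_of_dvd (n.gcd_dvd_left c)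
  have : NeZero (n / n.gcd c) := ⟨ne_zero_of_dvd_ne_zero (NeZero.ne n) hmn⟩
  calc ∑ z ∈ primitiveRoots n R, z ^ c
      = ∑ u : (ZMod n)ˣ, (ζ ^ c) ^ (ZMod.unitsMap hmn u : ZMod (n / n.gcd c)).val := by
        simp only [sum_primitiveRoots_eq_sum_units hζ, pow_val_unitsMap hmn hη.pow_eq_one,
          pow_right_comm ζ c]
    _ = (φ n / φ (n / n.gcd c)) • ∑ z ∈ primitiveRoots (n / n.gcd c) R, z := by
        rw [sum_comp_unitsMap hmn fun v => (ζ ^ c) ^ (v : ZMod (n / n.gcd c)).val,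
          sum_primitiveRoots_eq_sum_units hη]
    _ = (φ n / φ (n / n.gcd c)) • (μ (n / n.gcd c) : R) := by
        rw [sum_primitiveRoots_eq_moebius hη]

lemma pow_mem_primitiveRoots_div_iff [NeZero n] (hζ : IsPrimitiveRoot ζ n) {d : ℕ} (hd : d ∣ n)
    (i : ℕ) : ζ ^ i ∈ primitiveRoots (n / d) R ↔ i.gcd n = d := by
  have hζi := isPrimitiveRoot_pow_div_gcd hζ i
  rw [mem_primitiveRoots (Nat.pos_of_dvd_of_pos (Nat.div_dvd_of_dvd hd) (NeZero.pos n)),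
    Nat.gcd_comm]
  refine ⟨fun h => ?_, fun h => h ▸ hζi⟩
  rw [← Nat.div_div_self hd (NeZero.ne n), h.unique hζi,
    Nat.div_div_self (n.gcd_dvd_left i) (NeZero.ne n)]

lemma sum_filter_gcd_eq_sum_primitiveRoots [NeZero n] (hζ : IsPrimitiveRoot ζ n) {d : ℕ}
    (hd : d ∣ n) (f : R → M) :
    ∑ i ∈ Icc 1 n with i.gcd n = d, f (ζ ^ i) = ∑ z ∈ primitiveRoots (n / d) R, f z := by
  have hbij := bijOn_pow_Icc_nthRootsFinset hζ
  refine sum_nbij (ζ ^ ·) ?_ ?_ ?_ fun _ _ => rfl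
  · intro i hi
    exact (pow_mem_primitiveRoots_div_iff hζ hd i).2 (mem_filter.1 hi).2
  · exact hbij.injOn.mono (coe_subset.2 (filter_subset _ _))
  · intro z hz
    have hzn : z ^ n = 1 :=
      ((isPrimitiveRoot_of_mem_primitiveRoots hz).pow_eq_one_iff_dvd n).2 (Nat.div_dvd_of_dvd hd)
    obtain ⟨i, hi, rfl⟩ := hbij.surjOn ((Polynomial.mem_nthRootsFinset (NeZero.pos n) 1).2 hzn)
    exact ⟨i, mem_filter.2 ⟨hi, (pow_mem_primitiveRoots_div_iff hζ hd i).1 hz⟩, rfl⟩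

lemma div_div_gcd_div {d : ℕ} (hd : d ∣ n) (c : ℕ) :
    n / d / (n / d).gcd c = n / n.gcd (d * c) := by
  rw [Nat.div_div_eq_div_mul, ← Nat.gcd_mul_left, Nat.mul_div_cancel' hd]

/-- The division in `ℕ` is exact, and `φ (N / N.gcd (d * c))` may vanish in `R`. -/
theorem sum_primitive_roots_pow_general {N : ℕ} [NeZero N] {ξ : R} (hξ : IsPrimitiveRoot ξ N)
    {d : ℕ} (hd : d ∣ N) (c : ℕ) :
    ∑ i ∈ Icc 1 N with i.gcd N = d, ξ ^ (i * c) =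
      (φ (N / d) / φ (N / N.gcd (d * c))) • (μ (N / N.gcd (d * c)) : R) := by
  have : NeZero (N / d) := ⟨ne_zero_of_dvd_ne_zero (NeZero.ne N) (Nat.div_dvd_of_dvd hd)⟩
  have hroot : IsPrimitiveRoot (ξ ^ d) (N / d) :=
    hξ.pow (NeZero.pos N) (Nat.mul_div_cancel' hd).symm
  simp only [pow_mul]
  rw [sum_filter_gcd_eq_sum_primitiveRoots hξ hd (· ^ c), sum_primitiveRoots_pow hroot,
    div_div_gcd_div hd]

end RamanujanSum

/-- For `ξ = exp(2πi/N)` a primitive `N`-th root of unity and positive divisors `d, c` of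
`N`, we have `∑_{1 ≤ i ≤ N, gcd(i,N) = d} ξ^{ic} = (φ(N/d)/φ(N/gcd(N,dc))) · μ(N/gcd(N,dc))`. -/
theorem sum_primitive_roots_pow
    (N : ℕ) (hN : 0 < N) (d c : ℕ) (hd0 : 0 < d) (hc0 : 0 < c)
    (hd : d ∣ N) (hc : c ∣ N) :
    (∑ i ∈ (Finset.Icc 1 N).filter (fun i => Nat.gcd i N = d),
        Complex.exp (2 * Real.pi * Complex.I / N) ^ (i * c)) =
      ((Nat.totient (N / d) : ℂ) / (Nat.totient (N / N.gcd (d * c)) : ℂ)) *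
        ((ArithmeticFunction.moebius (N / N.gcd (d * c)) : ℤ) : ℂ) := by
  have : NeZero N := ⟨hN.ne'⟩
  have hdvd : N / N.gcd (d * c) ∣ N / d :=
    Nat.div_dvd_div_left (N.gcd_dvd_left _) (Nat.dvd_gcd hd (d.dvd_mul_right c))
  rw [sum_primitive_roots_pow_general (Complex.isPrimitiveRoot_exp N hN.ne') hd, nsmul_eq_mul,
    Nat.cast_div_charZero (Nat.totient_dvd_of_dvd hdvd)]
end

section
/- Let N be a positive integer, let e be a positive divisor of N, and let E = (e) = {d ∈ D(N) : e | d} be the filter in D(N) generated by e. Then for every c ∈ D(N): a_c(E) = N/e if (N/e) | c, and a_c(E) = 0 otherwise. In particular a_c(E) ≥ 0 for all c ∈ D(N) whenever E is a filter. -/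
/-!
Put `n = N / e`. The substitution `M = N / d` turns the filter `(e)` into the set of divisors of
`n`, and `N / gcd(N, dc) = M / gcd(M, c)`, so by Hölder's identity the summand of `a_c` at `d` is
the Ramanujan sum `c_M(c)`. Since `M ↦ c_M(c)` is the Möbius transform of `n ↦ n · [n ∣ c]`, its
sum over the divisors of `n` is `n · [n ∣ c]`. Hölder's identity, with the denominator cleared, is
multiplicative in `M`; at a prime power the Möbius transform is a difference of two consecutive
values of `n · [n ∣ c]`.
-/

open Finset

/-- `a_c(E) = ∑_{d ∈ E} (φ(N/d)/φ(N/gcd(N,dc))) · μ(N/gcd(N,dc))`. -/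
noncomputable def acSum (N : ℕ) (E : Finset ℕ) (c : ℕ) : ℚ :=
  ∑ d ∈ E, ((Nat.totient (N / d) : ℚ) / (Nat.totient (N / N.gcd (d * c)) : ℚ)) *
    ((ArithmeticFunction.moebius (N / N.gcd (d * c)) : ℤ) : ℚ)

open ArithmeticFunction
open scoped ArithmeticFunction.Moebius ArithmeticFunction.zeta

theorem mul_div_gcd_mul_left {d : ℕ} (hd : 0 < d) (m c : ℕ) :
    d * m / (d * m).gcd (d * c) = m / m.gcd c := by
  rw [Nat.gcd_mul_left, Nat.mul_div_mul_left _ _ hd]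

theorem mul_div_gcd_of_coprime {m n : ℕ} (h : m.Coprime n) (c : ℕ) :
    m * n / (m * n).gcd c = m / m.gcd c * (n / n.gcd c) := by
  rw [Nat.gcd_comm, h.gcd_mul c, Nat.gcd_comm c m, Nat.gcd_comm c n]
  exact Nat.mul_div_mul_comm (Nat.gcd_dvd_left m c) (Nat.gcd_dvd_left n c)

theorem prime_pow_succ_div_gcd_of_dvd {p k c : ℕ} (hp : p.Prime) (h : p ^ k ∣ c)
    (h' : ¬p ^ (k + 1) ∣ c) : p ^ (k + 1) / (p ^ (k + 1)).gcd c = p := by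
  obtain ⟨b, rfl⟩ := h
  have hb : ¬p ∣ b := fun hpb => h' (pow_succ p k ▸ mul_dvd_mul_left (p ^ k) hpb)
  rw [pow_succ, mul_div_gcd_mul_left (pow_pos hp.pos k), (hp.coprime_iff_not_dvd.2 hb).gcd_eq_one,
    Nat.div_one]

theorem not_squarefree_prime_pow_succ_div_gcd {p k c : ℕ} (hp : p.Prime) (h : ¬p ^ k ∣ c) :
    ¬Squarefree (p ^ (k + 1) / (p ^ (k + 1)).gcd c) := by
  obtain ⟨j, hj, hgcd⟩ := (Nat.dvd_prime_pow hp).1 (Nat.gcd_dvd_left (p ^ (k + 1)) c)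
  have hjc : p ^ j ∣ c := hgcd ▸ Nat.gcd_dvd_right _ _
  have hjk : j < k := lt_of_not_ge fun hkj => h ((pow_dvd_pow p hkj).trans hjc)
  rw [hgcd, Nat.pow_div hj hp.pos, Nat.squarefree_pow_iff hp.ne_one (by lia)]
  lia

theorem divisors_mul_filter_dvd {e : ℕ} (he : 0 < e) (n : ℕ) :
    {d ∈ (e * n).divisors | e ∣ d} = n.divisors.image (e * ·) := by
  ext d
  simp only [mem_filter, mem_image, Nat.mem_divisors]
  constructor
  · rintro ⟨⟨hd, hen⟩, d, rfl⟩
    exact ⟨d, ⟨Nat.dvd_of_mul_dvd_mul_left he hd, right_ne_zero_of_mul hen⟩, rfl⟩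
  · rintro ⟨d, ⟨hd, hn⟩, rfl⟩
    exact ⟨⟨mul_dvd_mul_left e hd, mul_ne_zero he.ne' hn⟩, dvd_mul_right e d⟩

theorem sum_filter_dvd_divisors_mul_div {R : Type*} [AddCommMonoid R] (f : ℕ → R) {e : ℕ}
    (he : 0 < e) (n : ℕ) :
    ∑ d ∈ (e * n).divisors with e ∣ d, f (e * n / d) = ∑ M ∈ n.divisors, f M := by
  rw [divisors_mul_filter_dvd he, sum_image (mul_right_injective₀ he.ne').injOn,
    ← Nat.sum_div_divisors n f]
  simp only [Nat.mul_div_mul_left _ _ he]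

theorem zeta_mul_apply_prime_pow_succ {R : Type*} [Semiring R] (f : ArithmeticFunction R) {p : ℕ}
    (hp : p.Prime) (k : ℕ) :
    ((ζ : ArithmeticFunction R) * f) (p ^ (k + 1)) =
      ((ζ : ArithmeticFunction R) * f) (p ^ k) + f (p ^ (k + 1)) := by
  simp only [coe_zeta_mul_apply, Nat.sum_divisors_prime_pow hp, sum_range_succ _ (k + 1)]

/-- The arithmetic function that agrees with `f` on the divisors of `c` and vanishes elsewhere.
For `f = id` it is `n ↦ n · [n ∣ c]`, whose Möbius transform is the Ramanujan sum. -/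
def restrictDivisors {R : Type*} [Zero R] (f : ArithmeticFunction R) (c : ℕ) :
    ArithmeticFunction R where
  toFun n := if n ∣ c then f n else 0
  map_zero' := by simp

theorem restrictDivisors_apply {R : Type*} [Zero R] (f : ArithmeticFunction R) (c n : ℕ) :
    restrictDivisors f c n = if n ∣ c then f n else 0 := rfl

theorem isMultiplicative_restrictDivisors {R : Type*} [MonoidWithZero R]
    {f : ArithmeticFunction R} (hf : f.IsMultiplicative) (c : ℕ) :
    (restrictDivisors f c).IsMultiplicative := by
  refine ⟨by simp [restrictDivisors_apply, hf.map_one], fun {m n} hmn => ?_⟩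
  have hdvd : m * n ∣ c ↔ m ∣ c ∧ n ∣ c :=
    ⟨fun h => ⟨dvd_of_mul_right_dvd h, dvd_of_mul_left_dvd h⟩,
      fun h => hmn.mul_dvd_of_dvd_of_dvd h.1 h.2⟩
  simp only [restrictDivisors_apply, hdvd, hf.map_mul_of_coprime hmn, ite_zero_mul_ite_zero]

/-- The Ramanujan sum `c_M(c)` as an arithmetic function of the modulus `M`. It is encoded by
Kluyver's formula `c_M(c) = ∑ d ∣ gcd(M, c), μ(M / d) d` instead of by roots of unity. -/
def ramanujanSum (c : ℕ) : ArithmeticFunction ℤ :=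
  μ * restrictDivisors (ArithmeticFunction.id : ArithmeticFunction ℤ) c

theorem zeta_mul_ramanujanSum (c : ℕ) :
    (ζ : ArithmeticFunction ℤ) * ramanujanSum c =
      restrictDivisors (ArithmeticFunction.id : ArithmeticFunction ℤ) c := by
  rw [ramanujanSum, ← mul_assoc, coe_zeta_mul_moebius, one_mul]

theorem sum_divisors_ramanujanSum (c n : ℕ) :
    ∑ M ∈ n.divisors, ramanujanSum c M = if n ∣ c then (n : ℤ) else 0 := by
  rw [← coe_zeta_mul_apply, zeta_mul_ramanujanSum, restrictDivisors_apply, natCoe_apply, id_apply]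

theorem isMultiplicative_ramanujanSum (c : ℕ) : (ramanujanSum c).IsMultiplicative :=
  isMultiplicative_moebius.mul (isMultiplicative_restrictDivisors isMultiplicative_id.natCast c)

theorem ramanujanSum_prime_pow_succ (c : ℕ) {p : ℕ} (hp : p.Prime) (k : ℕ) :
    ramanujanSum c (p ^ (k + 1)) =
      (if p ^ (k + 1) ∣ c then (p : ℤ) ^ (k + 1) else 0) -
        if p ^ k ∣ c then (p : ℤ) ^ k else 0 := by
  have h := zeta_mul_apply_prime_pow_succ (ramanujanSum c) hp k
  simp only [zeta_mul_ramanujanSum, restrictDivisors_apply, natCoe_apply, id_apply,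
    Nat.cast_pow] at h
  exact eq_sub_of_add_eq' h.symm

theorem totient_mul_ramanujanSum_prime_pow_succ (c : ℕ) {p : ℕ} (hp : p.Prime) (k : ℕ) :
    (Nat.totient (p ^ (k + 1) / (p ^ (k + 1)).gcd c) : ℤ) * ramanujanSum c (p ^ (k + 1)) =
      Nat.totient (p ^ (k + 1)) * μ (p ^ (k + 1) / (p ^ (k + 1)).gcd c) := by
  have hφ : (Nat.totient (p ^ (k + 1)) : ℤ) = p ^ k * (p - 1) := by
    rw [Nat.totient_prime_pow_succ hp, Nat.cast_mul, Nat.cast_pow, Nat.cast_pred hp.pos]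
  rw [ramanujanSum_prime_pow_succ c hp, hφ]
  by_cases hk : p ^ k ∣ c
  · by_cases hk' : p ^ (k + 1) ∣ c
    · rw [if_pos hk, if_pos hk', Nat.gcd_eq_left hk', Nat.div_self (pow_pos hp.pos _),
        Nat.totient_one, moebius_apply_one, Nat.cast_one]
      ring
    · rw [if_pos hk, if_neg hk', prime_pow_succ_div_gcd_of_dvd hp hk hk', Nat.totient_prime hp,
        moebius_apply_prime hp, Nat.cast_pred hp.pos]
      ring
  · have hk' : ¬p ^ (k + 1) ∣ c := fun h => hk ((pow_dvd_pow p k.le_succ).trans h)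
    rw [if_neg hk, if_neg hk',
      moebius_eq_zero_of_not_squarefree (not_squarefree_prime_pow_succ_div_gcd hp hk), sub_zero,
      mul_zero, mul_zero]

theorem totient_mul_ramanujanSum (c M : ℕ) :
    (Nat.totient (M / M.gcd c) : ℤ) * ramanujanSum c M = Nat.totient M * μ (M / M.gcd c) := by
  induction M using Nat.recOnPosPrimePosCoprime with
  | zero => simp
  | one => simp [(isMultiplicative_ramanujanSum c).map_one]
  | prime_pow p k hp hk =>
    obtain ⟨k, rfl⟩ := Nat.exists_eq_succ_of_ne_zero hk.ne'
    exact totient_mul_ramanujanSum_prime_pow_succ c hp k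
  | coprime m n _ _ hmn ihm ihn =>
    have hco : (m / m.gcd c).Coprime (n / n.gcd c) :=
      hmn.of_dvd (Nat.div_dvd_of_dvd (Nat.gcd_dvd_left m c))
        (Nat.div_dvd_of_dvd (Nat.gcd_dvd_left n c))
    rw [mul_div_gcd_of_coprime hmn, Nat.totient_mul hco, Nat.totient_mul hmn,
      isMultiplicative_moebius.map_mul_of_coprime hco,
      (isMultiplicative_ramanujanSum c).map_mul_of_coprime hmn, Nat.cast_mul, Nat.cast_mul,
      mul_mul_mul_comm, ihm, ihn, mul_mul_mul_comm]

/-- **Hölder's identity** for Ramanujan sums. -/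
theorem ramanujanSum_eq_totient_div_totient_mul_moebius (c M : ℕ) :
    (ramanujanSum c M : ℚ) =
      (Nat.totient M : ℚ) / Nat.totient (M / M.gcd c) * μ (M / M.gcd c) := by
  rcases M.eq_zero_or_pos with rfl | hM
  · simp
  have hφ : (Nat.totient (M / M.gcd c) : ℚ) ≠ 0 :=
    Nat.cast_ne_zero.2 (Nat.totient_pos.2 (Nat.div_gcd_pos_of_pos_left c hM)).ne'
  rw [div_mul_eq_mul_div, eq_div_iff hφ, mul_comm]
  exact_mod_cast totient_mul_ramanujanSum c M

theorem acSum_eq_sum_ramanujanSum {N : ℕ} {E : Finset ℕ} (hE : E ⊆ N.divisors) (c : ℕ) :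
    acSum N E c = ∑ d ∈ E, (ramanujanSum c (N / d) : ℚ) := by
  refine sum_congr rfl fun d hd => ?_
  have hdN := hE hd
  obtain ⟨M, rfl⟩ := Nat.dvd_of_mem_divisors hdN
  have hd : 0 < d := Nat.pos_of_mem_divisors hdN
  rw [ramanujanSum_eq_totient_div_totient_mul_moebius, Nat.mul_div_cancel_left M hd,
    mul_div_gcd_mul_left hd]

theorem acSum_of_filter_general {N e : ℕ} (hN : 0 < N) (he : e ∣ N) (c : ℕ) :
    acSum N (N.divisors.filter (fun d => e ∣ d)) c =
        (if (N / e) ∣ c then ((N / e : ℕ) : ℚ) else 0) ∧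
      0 ≤ acSum N (N.divisors.filter (fun d => e ∣ d)) c := by
  have he_pos : 0 < e := Nat.pos_of_dvd_of_pos he hN
  obtain ⟨n, rfl⟩ := he
  have hsum : acSum (e * n) ((e * n).divisors.filter (fun d => e ∣ d)) c =
      if n ∣ c then (n : ℚ) else 0 := by
    rw [acSum_eq_sum_ramanujanSum (filter_subset _ _),
      sum_filter_dvd_divisors_mul_div (fun M => (ramanujanSum c M : ℚ)) he_pos]
    exact_mod_cast sum_divisors_ramanujanSum c n
  rw [Nat.mul_div_cancel_left n he_pos, hsum]
  exact ⟨rfl, by positivity⟩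

/-- For the filter `E = (e) = {d ∣ N : e ∣ d}` in the divisors of `N` one has
`a_c(E) = N/e` if `(N/e) ∣ c` and `a_c(E) = 0` otherwise; in particular `a_c(E) ≥ 0`
for all divisors `c` of `N`. -/
theorem acSum_of_filter (N : ℕ) (hN : 0 < N) (e : ℕ) (he : e ∣ N) :
    (∀ c ∈ N.divisors,
      acSum N (N.divisors.filter (fun d => e ∣ d)) c =
        if (N / e) ∣ c then ((N / e : ℕ) : ℚ) else 0) ∧
    (∀ c ∈ N.divisors, 0 ≤ acSum N (N.divisors.filter (fun d => e ∣ d)) c) :=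
  ⟨fun c _ => (acSum_of_filter_general hN he c).1, fun c _ => (acSum_of_filter_general hN he c).2⟩
end

section
/- Let N be a positive integer and e a divisor of N with e ≠ 1 (so the filter (e) is not all of D(N)), and assume it is not the case that N is a prime power p^n and e = p. Then for the modified set Ẽ = (e) ∪ {1} there exists c ∈ D(N) with a_c(Ẽ) < 0. (If N = p^n and e = p, then (p) ∪ {1} = D(N) is again a filter.) -/
open Finset

/-!
The summand of `a_c(E)` at `d` is the Ramanujan sum `c_{N/d}(c)`. For `c = N / p` with `p` a prime
divisor of `N` it is `φ(N/d)` if `p ∣ d` and `-φ(N/d)/(p - 1)` otherwise, so Gauss's identity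
`∑_{e ∣ d ∣ N} φ(N/d) = N/e` gives
`(p - 1) a_{N/p}((e) ∪ {1}) = (N/e) (gcd(e, p) - 1) - φ(N)`.
If some prime `p ∣ N` does not divide `e`, this is `-φ(N) < 0`. Otherwise `φ(N) = (N/e) φ(e)`, and
for `p` the least prime factor of `e` it is `(N/e) (p - 1 - φ(e))`, which is negative unless
`e = p`, in which case `N` is a power of `p`.
-/

open scoped Nat

theorem sum_div_divisors_filter_dvd {M : Type*} [AddCommMonoid M] {N e : ℕ} (he : e ∣ N)
    (f : ℕ → M) :
    ∑ d ∈ N.divisors with e ∣ d, f (N / d) = ∑ m ∈ (N / e).divisors, f m := by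
  rcases eq_or_ne N 0 with rfl | hN
  · simp
  have hfilter : {m ∈ N.divisors | e ∣ N / m} = (N / e).divisors := by
    rw [← Nat.divisors_filter_dvd_of_dvd hN (Nat.div_dvd_of_dvd he)]
    refine filter_congr fun m hm => ?_
    rw [Nat.dvd_div_iff_mul_dvd (Nat.dvd_of_mem_divisors hm), Nat.dvd_div_iff_mul_dvd he, mul_comm]
  calc ∑ d ∈ N.divisors with e ∣ d, f (N / d)
      = ∑ d ∈ N.divisors, if e ∣ N / (N / d) then f (N / d) else 0 := by
        rw [sum_filter]
        refine sum_congr rfl fun d hd => ?_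
        rw [Nat.div_div_self (Nat.dvd_of_mem_divisors hd) hN]
    _ = ∑ m ∈ (N / e).divisors, f m := by
        rw [Nat.sum_div_divisors N fun m => if e ∣ N / m then f m else 0, ← sum_filter, hfilter]

theorem sum_totient_div_filter_dvd {N e : ℕ} (he : e ∣ N) :
    ∑ d ∈ N.divisors with e ∣ d, φ (N / d) = N / e := by
  rw [sum_div_divisors_filter_dvd he, Nat.sum_totient]

theorem totient_mul_eq_mul_totient_of_primeFactors_eq {m n : ℕ}
    (h : m.primeFactors = n.primeFactors) : φ m * n = m * φ n := by
  have hQ : (φ m * n : ℚ) = m * φ n := by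
    rw [Nat.totient_eq_mul_prod_factors m, Nat.totient_eq_mul_prod_factors n, h]
    ring
  exact_mod_cast hQ

/-- The residues `1, …, n.minFac - 1` and `n - 1` are distinct and coprime to `n`. -/
theorem minFac_le_totient_of_not_prime {n : ℕ} (hn : n ≠ 0) (hnp : ¬ n.Prime) :
    n.minFac ≤ φ n := by
  have hle : n.minFac ≤ n := Nat.minFac_le (Nat.pos_of_ne_zero hn)
  have hne : n - 1 ∉ Ico 1 n.minFac := by
    intro h
    rw [mem_Ico] at h
    exact hnp (Nat.prime_def_minFac.2 ⟨by omega, by omega⟩)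
  have hsub : insert (n - 1) (Ico 1 n.minFac) ⊆ {a ∈ range n | n.Coprime a} := by
    refine insert_subset ?_ fun a ha => ?_
    · rw [mem_filter, mem_range]
      exact ⟨by omega, by rw [Nat.coprime_self_sub_right (by omega)]; simp⟩
    · rw [mem_Ico] at ha
      rw [mem_filter, mem_range]
      exact ⟨by omega, Nat.coprime_of_lt_minFac (by omega) ha.2⟩
  calc n.minFac = #(insert (n - 1) (Ico 1 n.minFac)) := by
        rw [card_insert_of_notMem hne, Nat.card_Ico, Nat.sub_add_cancel n.minFac_pos]
    _ ≤ φ n := by rw [Nat.totient_eq_card_coprime]; exact card_le_card hsub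

section DivPrime

variable {N p : ℕ}

theorem acSum_div_prime (hN : N ≠ 0) (hp : p.Prime) (hpN : p ∣ N) (E : Finset ℕ) :
    acSum N E (N / p) =
      (p * ∑ d ∈ E with p ∣ d, (φ (N / d) : ℚ) - ∑ d ∈ E, (φ (N / d) : ℚ)) / (p - 1) := by
  have hp1 : (p : ℚ) - 1 ≠ 0 := sub_ne_zero.2 (mod_cast hp.ne_one)
  obtain ⟨c, rfl⟩ := hpN
  have hc : 0 < c := Nat.pos_of_ne_zero (right_ne_zero_of_mul hN)
  rw [acSum, sum_filter, mul_sum, ← sum_sub_distrib, sum_div]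
  refine sum_congr rfl fun d _ => ?_
  rw [Nat.mul_div_cancel_left c hp.pos, Nat.gcd_mul_right, Nat.mul_div_mul_right _ _ hc]
  split_ifs with hpd
  · rw [Nat.gcd_eq_left hpd, Nat.div_self hp.pos, Nat.totient_one,
      ArithmeticFunction.moebius_apply_one]
    field_simp
    simp
  · rw [(hp.coprime_iff_not_dvd).2 hpd, Nat.div_one, Nat.totient_prime hp,
      ArithmeticFunction.moebius_apply_prime hp, Nat.cast_sub hp.one_le]
    push_cast
    ring

theorem acSum_filter_dvd_div_prime {e : ℕ} (hN : N ≠ 0) (hp : p.Prime) (hpN : p ∣ N)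
    (he : e ∣ N) :
    acSum N {d ∈ N.divisors | e ∣ d} (N / p) = N / e * (e.gcd p - 1) / (p - 1) := by
  have hsum {m : ℕ} (hm : m ∣ N) :
      ∑ d ∈ N.divisors with m ∣ d, (φ (N / d) : ℚ) = N / m := by
    rw [← Nat.cast_sum, sum_totient_div_filter_dvd hm, Nat.cast_div_charZero hm]
  have he0 : (e : ℚ) ≠ 0 := mod_cast ne_zero_of_dvd_ne_zero hN he
  have hlcm0 : (e.lcm p : ℚ) ≠ 0 :=
    mod_cast Nat.lcm_ne_zero (ne_zero_of_dvd_ne_zero hN he) hp.ne_zero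
  have hgcd : (e.gcd p * e.lcm p : ℚ) = e * p := mod_cast Nat.gcd_mul_lcm e p
  rw [acSum_div_prime hN hp hpN, filter_filter]
  simp only [← Nat.lcm_dvd_iff]
  rw [hsum he, hsum (Nat.lcm_dvd he hpN)]
  congr 1
  field_simp
  linear_combination -hgcd

theorem acSum_insert_one_filter_dvd_div_prime {e : ℕ} (hN : N ≠ 0) (hp : p.Prime) (hpN : p ∣ N)
    (he : e ∣ N) (he1 : e ≠ 1) :
    acSum N (insert 1 {d ∈ N.divisors | e ∣ d}) (N / p) =
      (N / e * (e.gcd p - 1) - φ N) / (p - 1) := by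
  have hone : acSum N {1} (N / p) = -φ N / (p - 1) := by
    simp [acSum_div_prime hN hp hpN, filter_singleton, hp.ne_one]
  have hinsert : acSum N (insert 1 {d ∈ N.divisors | e ∣ d}) (N / p) =
      acSum N {1} (N / p) + acSum N {d ∈ N.divisors | e ∣ d} (N / p) := by
    rw [acSum, sum_insert (by simp [he1]), acSum, acSum, sum_singleton]
  rw [hinsert, hone, acSum_filter_dvd_div_prime hN hp hpN he]
  ring

end DivPrime

theorem exists_prime_dvd_div_mul_gcd_sub_one_lt_totient {N e : ℕ} (hN : N ≠ 0) (he : e ∣ N)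
    (he1 : e ≠ 1) (hnp : ¬ (e.Prime ∧ ∃ n, N = e ^ n)) :
    ∃ p : ℕ, p.Prime ∧ p ∣ N ∧ (N / e * (e.gcd p - 1) : ℚ) < φ N := by
  have he0 : e ≠ 0 := ne_zero_of_dvd_ne_zero hN he
  by_cases hdvd : ∀ p : ℕ, p.Prime → p ∣ N → p ∣ e
  · have hnot_prime : ¬ e.Prime := fun hprime =>
      hnp ⟨hprime, _, Nat.eq_prime_pow_of_unique_prime_dvd hN fun hq hqN =>
        (Nat.prime_dvd_prime_iff_eq hq hprime).1 (hdvd _ hq hqN)⟩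
    have hfactors : N.primeFactors = e.primeFactors := by
      ext q
      simp only [Nat.mem_primeFactors]
      exact ⟨fun h => ⟨h.1, hdvd q h.1 h.2.1, he0⟩, fun h => ⟨h.1, h.2.1.trans he, hN⟩⟩
    have htotient : (φ N : ℚ) = N / e * φ e := by
      have : (φ N * e : ℚ) = N * φ e :=
        mod_cast totient_mul_eq_mul_totient_of_primeFactors_eq hfactors
      field_simp
      exact this
    have hminFac : (e.minFac : ℚ) ≤ φ e := mod_cast minFac_le_totient_of_not_prime he0 hnot_prime
    refine ⟨e.minFac, Nat.minFac_prime he1, e.minFac_dvd.trans he, ?_⟩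
    rw [Nat.gcd_eq_right e.minFac_dvd, htotient]
    gcongr
    linarith
  · push Not at hdvd
    obtain ⟨p, hp, hpN, hpe⟩ := hdvd
    refine ⟨p, hp, hpN, ?_⟩
    rw [Nat.gcd_comm, (hp.coprime_iff_not_dvd).2 hpe]
    simpa using Nat.pos_of_ne_zero hN

/-- Let `e ∣ N` with `e ≠ 1` (so the filter `(e)` is a proper subset of the divisors of
`N`), and assume we are not in the case where `N = p ^ n` is a prime power and `e = p`.
Then for the modified set `Ẽ = (e) ∪ {1}` some `a_c(Ẽ)` with `c ∣ N` is negative. -/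
theorem acSum_neg_of_filter_union_one
    (N : ℕ) (hN : 0 < N) (e : ℕ) (he : e ∣ N) (he1 : e ≠ 1)
    (hnp : ¬ ∃ (p n : ℕ), p.Prime ∧ N = p ^ n ∧ e = p) :
    ∃ c ∈ N.divisors,
      acSum N (insert 1 (N.divisors.filter (fun d => e ∣ d))) c < 0 := by
  have hnp' : ¬ (e.Prime ∧ ∃ n, N = e ^ n) := fun ⟨hprime, n, hn⟩ => hnp ⟨e, n, hprime, hn, rfl⟩
  obtain ⟨p, hp, hpN, hlt⟩ :=
    exists_prime_dvd_div_mul_gcd_sub_one_lt_totient hN.ne' he he1 hnp'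
  refine ⟨N / p, Nat.mem_divisors.2 ⟨Nat.div_dvd_of_dvd hpN, hN.ne'⟩, ?_⟩
  rw [acSum_insert_one_filter_dvd_div_prime hN.ne' hp hpN he he1]
  have hp1 : (1 : ℚ) < p := mod_cast hp.one_lt
  exact div_neg_of_neg_of_pos (sub_neg.2 hlt) (sub_pos.2 hp1)
end

section
/- Let N be a positive integer and E ⊆ D(N) such that for every prime p dividing N there exists d ∈ E with p | d, and the set E_p = {d/p : d ∈ E, p | d} is a filter in D(N/p), say E_p = {d' ∈ D(N/p) : e_p | d'} for some e_p | N/p. Then either there exists a prime p | N with p | e_q for all primes q ≠ p dividing N, or e_p = 1 for all p. In the first case E = (p·e_p) or E = (p·e_p) ∪ {1}; in the second case E = D(N) or E = D(N) \ {1}. -/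
/-!
A divisor `d` of `N` divisible by the prime `p` lies in `E` iff `p * e p ∣ d`. For two primes `p`
and `q`, the number `lcm (q * e q) p` is divisible by both; it is in `E` by the criterion at `q`,
and then the criterion at `p` gives `p * e p ∣ lcm (q * e q) p`. Hence `e p ∣ q * e q`, so a prime
`r` dividing one `e p` divides every `e q` with `q ≠ r`. Either there is such an `r`, and then
`r * e r` divides every `q * e q` and so generates `E` away from `1`, or every `e p` is `1` and `E`
contains all divisors other than possibly `1`.
-/

open Finset

/-- The reduced divisor set `E_p = {d/p : d ∈ E, p ∣ d} ⊆ D(N/p)`. -/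
def divReduced (E : Finset ℕ) (p : ℕ) : Finset ℕ :=
  (E.filter (fun d => p ∣ d)).image (fun d => d / p)

theorem eq_or_eq_insert_of_erase_eq {α : Type*} [DecidableEq α] {s t : Finset α} {a : α}
    (h : s.erase a = t) : s = t ∨ s = insert a t := by
  subst h
  by_cases ha : a ∈ s
  · exact .inr (insert_erase ha).symm
  · exact .inl (erase_eq_of_notMem ha).symm

theorem mem_divReduced {E : Finset ℕ} {p k : ℕ} (hp : 0 < p) :
    k ∈ divReduced E p ↔ p * k ∈ E := by
  simp only [divReduced, mem_image, mem_filter]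
  constructor
  · rintro ⟨d, ⟨hdE, hpd⟩, rfl⟩
    rwa [Nat.mul_div_cancel' hpd]
  · exact fun hk => ⟨p * k, ⟨hk, dvd_mul_right p k⟩, Nat.mul_div_cancel_left k hp⟩

/-- `E` is a set of divisors of the positive integer `N` such that, for each prime `p ∣ N`, the
reduction `E_p` is the filter in `D(N/p)` generated by `e p`. The values of `e` at other arguments
are irrelevant. -/
structure HasFilterReductions (N : ℕ) (E : Finset ℕ) (e : ℕ → ℕ) : Prop where
  ne_zero : N ≠ 0
  subset_divisors : E ⊆ N.divisors
  generator_dvd : ∀ p : ℕ, p.Prime → p ∣ N → e p ∣ N / p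
  divReduced_eq : ∀ p : ℕ, p.Prime → p ∣ N →
    divReduced E p = (N / p).divisors.filter (fun d => e p ∣ d)

namespace HasFilterReductions

variable {N : ℕ} {E : Finset ℕ} {e : ℕ → ℕ} {p q r d : ℕ}

theorem mul_generator_dvd (h : HasFilterReductions N E e) (hp : p.Prime) (hpN : p ∣ N) :
    p * e p ∣ N :=
  Nat.mul_dvd_of_dvd_div hpN (h.generator_dvd p hp hpN)

theorem mem_iff_mul_generator_dvd (h : HasFilterReductions N E e) (hp : p.Prime) (hdN : d ∣ N)
    (hpd : p ∣ d) : d ∈ E ↔ p * e p ∣ d := by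
  have hpN : p ∣ N := hpd.trans hdN
  have hN : N / p ≠ 0 := (Nat.div_pos (Nat.le_of_dvd h.ne_zero.bot_lt hpN) hp.pos).ne'
  obtain ⟨k, rfl⟩ := hpd
  have hk : k ∣ N / p := Nat.dvd_div_of_mul_dvd hdN
  rw [← mem_divReduced hp.pos, h.divReduced_eq p hp hpN, mem_filter, Nat.mem_divisors,
    and_iff_right ⟨hk, hN⟩, Nat.mul_dvd_mul_iff_left hp.pos]

theorem mul_generator_dvd_lcm (h : HasFilterReductions N E e) (hp : p.Prime) (hpN : p ∣ N)
    (hq : q.Prime) (hqN : q ∣ N) : p * e p ∣ (q * e q).lcm p := by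
  have hlcm : (q * e q).lcm p ∣ N := Nat.lcm_dvd (h.mul_generator_dvd hq hqN) hpN
  have hqlcm : q * e q ∣ (q * e q).lcm p := Nat.dvd_lcm_left _ _
  have hmem : (q * e q).lcm p ∈ E :=
    (h.mem_iff_mul_generator_dvd hq hlcm (dvd_of_mul_right_dvd hqlcm)).2 hqlcm
  exact (h.mem_iff_mul_generator_dvd hp hlcm (Nat.dvd_lcm_right _ _)).1 hmem

theorem mul_generator_dvd_mul_generator (h : HasFilterReductions N E e) (hp : p.Prime)
    (hpN : p ∣ N) (hq : q.Prime) (hqN : q ∣ N) (hpq : p ∣ q * e q) : p * e p ∣ q * e q :=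
  (h.mul_generator_dvd_lcm hp hpN hq hqN).trans (Nat.lcm_dvd dvd_rfl hpq)

theorem generator_dvd_mul_generator (h : HasFilterReductions N E e) (hp : p.Prime)
    (hpN : p ∣ N) (hq : q.Prime) (hqN : q ∣ N) : e p ∣ q * e q :=
  Nat.dvd_of_mul_dvd_mul_left hp.pos <| (h.mul_generator_dvd_lcm hp hpN hq hqN).trans
    (Nat.lcm_dvd (dvd_mul_left _ _) (dvd_mul_right _ _))

theorem prime_dvd_generator (h : HasFilterReductions N E e) (hp : p.Prime) (hpN : p ∣ N)
    (hq : q.Prime) (hqN : q ∣ N) (hr : r.Prime) (hrp : r ∣ e p) (hqr : q ≠ r) : r ∣ e q :=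
  (hr.dvd_mul.1 (hrp.trans (h.generator_dvd_mul_generator hp hpN hq hqN))).resolve_left
    fun hrq => hqr ((Nat.prime_dvd_prime_iff_eq hr hq).1 hrq).symm

theorem erase_one_eq_filter (h : HasFilterReductions N E e) (hp : p.Prime) (hpN : p ∣ N)
    (hpe : ∀ q : ℕ, q.Prime → q ∣ N → q ≠ p → p ∣ e q) :
    E.erase 1 = N.divisors.filter (fun d => p * e p ∣ d) := by
  ext d
  rw [mem_erase, mem_filter]
  constructor
  · rintro ⟨hd1, hdE⟩
    have hdN : d ∣ N := Nat.dvd_of_mem_divisors (h.subset_divisors hdE)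
    obtain ⟨q, hq, hqd⟩ := Nat.exists_prime_and_dvd hd1
    have hqN : q ∣ N := hqd.trans hdN
    have hpq : p ∣ q * e q := by
      obtain rfl | hqp := eq_or_ne q p
      · exact dvd_mul_right q (e q)
      · exact (hpe q hq hqN hqp).mul_left q
    exact ⟨h.subset_divisors hdE, (h.mul_generator_dvd_mul_generator hp hpN hq hqN hpq).trans
      ((h.mem_iff_mul_generator_dvd hq hdN hqd).1 hdE)⟩
  · rintro ⟨hdD, hd⟩
    have hpd : p ∣ d := dvd_of_mul_right_dvd hd
    refine ⟨?_, (h.mem_iff_mul_generator_dvd hp (Nat.dvd_of_mem_divisors hdD) hpd).2 hd⟩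
    rintro rfl
    exact hp.not_dvd_one hpd

theorem erase_one_eq_divisors_erase_one (h : HasFilterReductions N E e)
    (he : ∀ p : ℕ, p.Prime → p ∣ N → e p = 1) : E.erase 1 = N.divisors.erase 1 := by
  refine (erase_subset_erase 1 h.subset_divisors).antisymm fun d hd => ?_
  obtain ⟨hd1, hdD⟩ := mem_erase.1 hd
  obtain ⟨q, hq, hqd⟩ := Nat.exists_prime_and_dvd hd1
  have hdN : d ∣ N := Nat.dvd_of_mem_divisors hdD
  have hqe : q * e q ∣ d := by rwa [he q hq (hqd.trans hdN), mul_one]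
  exact mem_erase.2 ⟨hd1, (h.mem_iff_mul_generator_dvd hq hdN hqd).2 hqe⟩

end HasFilterReductions

/-- Let `E ⊆ D(N)` be such that every prime `p ∣ N` divides some member of `E` and every
reduced set `E_p` is the filter in `D(N/p)` generated by some `e_p ∣ N/p`. Then either
there is a prime `p ∣ N` with `p ∣ e_q` for all primes `q ≠ p` dividing `N`, in which case
`E = (p·e_p)` or `E = (p·e_p) ∪ {1}`; or `e_p = 1` for all `p`, in which case `E = D(N)`
or `E = D(N) \ {1}`. -/
theorem divisor_filter_of_reductions_filters
    (N : ℕ) (hN : 0 < N) (E : Finset ℕ) (hE : E ⊆ N.divisors)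
    (hcover : ∀ p : ℕ, p.Prime → p ∣ N → ∃ d ∈ E, p ∣ d)
    (e : ℕ → ℕ)
    (hediv : ∀ p : ℕ, p.Prime → p ∣ N → e p ∣ N / p)
    (hfilter : ∀ p : ℕ, p.Prime → p ∣ N →
      divReduced E p = (N / p).divisors.filter (fun d => e p ∣ d)) :
    (∃ p : ℕ, p.Prime ∧ p ∣ N ∧
      (∀ q : ℕ, q.Prime → q ∣ N → q ≠ p → p ∣ e q) ∧
      (E = N.divisors.filter (fun d => p * e p ∣ d) ∨
        E = insert 1 (N.divisors.filter (fun d => p * e p ∣ d)))) ∨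
    ((∀ p : ℕ, p.Prime → p ∣ N → e p = 1) ∧
      (E = N.divisors ∨ E = N.divisors.erase 1)) := by
  have h : HasFilterReductions N E e := ⟨hN.ne', hE, hediv, hfilter⟩
  by_cases he : ∀ p : ℕ, p.Prime → p ∣ N → e p = 1
  · refine .inr ⟨he, ?_⟩
    have hEN := eq_or_eq_insert_of_erase_eq (h.erase_one_eq_divisors_erase_one he)
    rwa [insert_erase (Nat.one_mem_divisors.2 hN.ne'), or_comm] at hEN
  · push Not at he
    obtain ⟨p, hp, hpN, hep⟩ := he
    obtain ⟨r, hr, hrp⟩ := Nat.exists_prime_and_dvd hep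
    have hrN : r ∣ N := (hrp.mul_left p).trans (h.mul_generator_dvd hp hpN)
    have hre : ∀ q : ℕ, q.Prime → q ∣ N → q ≠ r → r ∣ e q :=
      fun q hq hqN hqr => h.prime_dvd_generator hp hpN hq hqN hr hrp hqr
    exact .inl ⟨r, hr, hrN, hre, eq_or_eq_insert_of_erase_eq (h.erase_one_eq_filter hr hrN hre)⟩
end

section
/- Let N be a positive integer and E a nonempty subset of D(N). If a_c(E) ≥ 0 for every c ∈ D(N), then E is a filter in D(N), i.e. there exists e ∈ D(N) with E = {d ∈ D(N) : e | d}. -/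
open Finset

/-!
`acSum N E c` is the value at `c` of the discrete Fourier transform of the indicator function of
`S = {j ∈ ℤ/N : gcd(N, j) ∈ E}`: the residues `j` with `gcd(N, j) = d` form the orbit of `d` under
`(ℤ/N)ˣ`, so their contribution is a Ramanujan sum, and averaging over the unit group gives
Hölder's evaluation of it. By Fourier inversion the indicator of `S` is thus a nonnegative
combination of characters. Its value at `0` is the total weight, which is nonzero and therefore `1`,
and this value is attained exactly where every character of nonzero weight is trivial. Hence `S` is
a subgroup of `ℤ/N`, and these correspond to the divisors of `N`.
-/

section GroupSums

theorem card_orbit_nsmul_sum_smul {G X M : Type*} [Group G] [Fintype G] [MulAction G X]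
    [AddCommMonoid M] (x : X) [Fintype (MulAction.orbit G x)] (F : X → M) :
    Fintype.card (MulAction.orbit G x) • ∑ g : G, F (g • x) =
      Fintype.card G • ∑ y : MulAction.orbit G x, F y := by
  have sum_smul_eq (y : MulAction.orbit G x) : ∑ g : G, F (g • (y : X)) = ∑ g : G, F (g • x) := by
    obtain ⟨-, h, rfl⟩ := y
    simpa [smul_smul] using Equiv.sum_comp (Equiv.mulRight h) fun g ↦ F (g • x)
  calc Fintype.card (MulAction.orbit G x) • ∑ g : G, F (g • x)
      = ∑ y : MulAction.orbit G x, ∑ g : G, F (g • (y : X)) := by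
        simp only [sum_smul_eq, sum_const, card_univ]
    _ = ∑ g : G, ∑ y : MulAction.orbit G x, F (g • y : MulAction.orbit G x) := sum_comm
    _ = Fintype.card G • ∑ y : MulAction.orbit G x, F y := by
        rw [← card_univ, ← sum_const]
        exact sum_congr rfl fun g _ ↦
          Equiv.sum_comp (MulAction.toPerm g) fun y : MulAction.orbit G x ↦ F y

theorem addOrderOf_group_smul {G A : Type*} [Group G] [AddMonoid A] [DistribMulAction G A] (g : G)
    (a : A) : addOrderOf (g • a) = addOrderOf a :=
  (DistribMulAction.toAddEquiv A g).addOrderOf_eq a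

variable {G R : Type*} [AddCommGroup G] [Fintype G] [CommRing R] [IsDomain R]

theorem sum_addChar_of_addOrderOf_nsmul_eq_zero [DecidableEq G] {ψ : AddChar G R}
    (hψ : Function.Injective ψ) (a : G) :
    ∑ b : G with addOrderOf a • b = 0, ψ b = if addOrderOf a = 1 then 1 else 0 := by
  split_ifs with ha
  · simp [ha, filter_eq']
  · have ψ_ne_one : ψ a ≠ 1 := fun h ↦
      ha (AddMonoid.addOrderOf_eq_one_iff.2 (hψ (h.trans ψ.map_zero_eq_one.symm)))
    have translate : ∑ b : G with addOrderOf a • b = 0, ψ b =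
        ψ a * ∑ b : G with addOrderOf a • b = 0, ψ b := by
      simp_rw [mul_sum, ← ψ.map_add_eq_mul, sum_filter]
      rw [← Equiv.sum_comp (Equiv.addLeft a)]
      simp [addOrderOf_nsmul_eq_zero]
    exact (mul_left_eq_self₀.1 translate.symm).resolve_left ψ_ne_one

theorem sum_addChar_of_addOrderOf_eq_moebius {ψ : AddChar G R} (hψ : Function.Injective ψ)
    {n : ℕ} (hn : n ∣ Fintype.card G) :
    ∑ b : G with addOrderOf b = n, ψ b = ArithmeticFunction.moebius n := by
  classical
  have : IsAddCyclic G :=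
    isCyclic_multiplicative_iff.1 (isCyclic_of_injective_ringHom ψ.toMonoidHom hψ)
  have sum_divisors (m : ℕ) (hm : 0 < m) (hmG : m ∣ Fintype.card G) :
      ∑ d ∈ m.divisors, ∑ b : G with addOrderOf b = d, ψ b = if m = 1 then 1 else 0 := by
    obtain ⟨a, ha⟩ : ∃ a : G, addOrderOf a = m := by
      have : 0 < #{a : G | addOrderOf a = m} := by
        rw [IsAddCyclic.card_addOrderOf_eq_totient hmG]
        exact Nat.totient_pos.2 hm
      simpa [Finset.Nonempty] using card_pos.1 this
    rw [← ha, ← sum_addChar_of_addOrderOf_nsmul_eq_zero hψ, sum_fiberwise_eq_sum_filter]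
    simp only [Nat.mem_divisors, addOrderOf_dvd_iff_nsmul_eq_zero, ne_eq, (addOrderOf_pos a).ne',
      not_false_eq_true, and_true]
  have n_pos : 0 < n := Nat.pos_of_dvd_of_pos hn Fintype.card_pos
  rw [← (ArithmeticFunction.sum_eq_iff_sum_mul_moebius_eq_on {m | m ∣ Fintype.card G}
    fun _ _ ↦ dvd_trans).1 sum_divisors n n_pos hn,
    Nat.sum_divisorsAntidiagonal' fun i j ↦ (ArithmeticFunction.moebius i : R) * ite (j = 1) 1 0]
  simp [n_pos.ne']

end GroupSums

section PositiveDefinite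

variable {G ι : Type*} [AddCommGroup G] [Finite G] [Fintype ι] {w : ι → ℝ} {χ : ι → AddChar G ℂ}

theorem sum_mul_addChar_eq_sum_iff (hw : ∀ i, 0 ≤ w i) (x : G) :
    ∑ i, w i * χ i x = ∑ i, (w i : ℂ) ↔ ∀ i, w i ≠ 0 → χ i x = 1 := by
  have re_le (i : ι) : (χ i x).re ≤ 1 := (Complex.re_le_norm _).trans_eq (AddChar.norm_apply _ _)
  constructor
  · intro h i hi
    have re_sum : ∑ j, w j * (χ j x).re = ∑ j, w j := by
      simpa using congrArg Complex.re h
    have re_eq : w i * (χ i x).re = w i :=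
      (sum_eq_sum_iff_of_le fun j _ ↦ mul_le_of_le_one_right (hw j) (re_le j)).1 re_sum i
        (mem_univ i)
    have re_eq_one : (χ i x).re = 1 := by simpa [hi] using re_eq
    have nonneg := Complex.re_eq_norm.1 (re_eq_one.trans (AddChar.norm_apply (χ i) x).symm)
    rw [Complex.eq_coe_norm_of_nonneg nonneg, AddChar.norm_apply, Complex.ofReal_one]
  · intro h
    refine sum_congr rfl fun i _ ↦ ?_
    by_cases hi : w i = 0
    · simp [hi]
    · rw [h i hi, mul_one]

theorem exists_addSubgroup_coe_eq_of_indicator_eq {S : Set G} (hS : S.Nonempty)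
    (hw : ∀ i, 0 ≤ w i) (h : ∀ x, S.indicator 1 x = ∑ i, w i * χ i x) :
    ∃ H : AddSubgroup G, (H : Set G) = S := by
  have sum_eq : S.indicator 1 0 = ∑ i, (w i : ℂ) := by simp [h]
  have zero_mem : (0 : G) ∈ S := by
    by_contra h0
    rw [Set.indicator_of_notMem h0, ← Complex.ofReal_sum, eq_comm, Complex.ofReal_eq_zero,
      sum_eq_zero_iff_of_nonneg fun i _ ↦ hw i] at sum_eq
    obtain ⟨x, hx⟩ := hS
    simpa [hx, sum_eq] using h x
  let H : AddSubgroup G :=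
    { carrier := {x | ∀ i, w i ≠ 0 → χ i x = 1}
      zero_mem' := fun i _ ↦ (χ i).map_zero_eq_one
      add_mem' := fun hx hy i hi ↦ by rw [AddChar.map_add_eq_mul, hx i hi, hy i hi, one_mul]
      neg_mem' := fun hx i hi ↦ by rw [AddChar.map_neg_eq_inv, hx i hi, inv_one] }
  refine ⟨H, Set.ext fun x ↦ (sum_mul_addChar_eq_sum_iff hw x).symm.trans ?_⟩
  rw [← h, ← sum_eq, Set.indicator_of_mem zero_mem]
  exact Set.indicator_eq_one_iff_mem ℂ

end PositiveDefinite

section ZMod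

variable {N : ℕ}

theorem exists_dvd_forall_natCast_mem_iff_dvd (H : AddSubgroup (ZMod N)) :
    ∃ e, e ∣ N ∧ ∀ d : ℕ, (d : ZMod N) ∈ H ↔ e ∣ d := by
  obtain ⟨a, ha⟩ := Int.subgroup_cyclic (H.comap (Int.castAddHom (ZMod N)))
  have natCast_mem_iff (d : ℕ) : (d : ZMod N) ∈ H ↔ a.natAbs ∣ d := by
    rw [← Int.natCast_dvd_natCast, Int.natAbs_dvd, ← Int.mem_zmultiples_iff,
      AddSubgroup.zmultiples_eq_closure, ← ha, AddSubgroup.mem_comap]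
    simp
  exact ⟨a.natAbs, (natCast_mem_iff N).1 (by simp), natCast_mem_iff⟩

variable [NeZero N]

theorem mem_orbit_units_natCast (a : ZMod N) :
    a ∈ MulAction.orbit (ZMod N)ˣ ((N / addOrderOf a : ℕ) : ZMod N) := by
  obtain ⟨d, hd, -, ⟨u, rfl⟩, rfl⟩ := ZMod.eq_unit_mul_divisor a
  rw [← smul_eq_mul, ← Units.smul_def, addOrderOf_group_smul, ZMod.addOrderOf_coe _ (NeZero.ne N),
    Nat.gcd_eq_right hd, Nat.div_div_self hd (NeZero.ne N)]
  exact MulAction.mem_orbit _ u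

theorem mem_orbit_units_iff_addOrderOf_eq {a b : ZMod N} :
    b ∈ MulAction.orbit (ZMod N)ˣ a ↔ addOrderOf b = addOrderOf a := by
  constructor
  · rintro ⟨u, rfl⟩
    exact addOrderOf_group_smul u a
  · intro h
    rw [← MulAction.orbit_eq_iff, MulAction.orbit_eq_iff.2 (mem_orbit_units_natCast b), h,
      MulAction.orbit_eq_iff.2 (mem_orbit_units_natCast a)]

theorem totient_nsmul_sum_units_smul {M : Type*} [AddCommMonoid M] (a : ZMod N) (F : ZMod N → M) :
    (addOrderOf a).totient • ∑ u : (ZMod N)ˣ, F (u • a) =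
      N.totient • ∑ b : ZMod N with addOrderOf b = addOrderOf a, F b := by
  classical
  have mem_iff (b : ZMod N) :
      b ∈ ({b | addOrderOf b = addOrderOf a} : Finset (ZMod N)) ↔
        b ∈ MulAction.orbit (ZMod N)ˣ a := by
    simp [mem_orbit_units_iff_addOrderOf_eq]
  have card_orbit : Fintype.card (MulAction.orbit (ZMod N)ˣ a) = (addOrderOf a).totient := by
    rw [← IsAddCyclic.card_addOrderOf_eq_totient (addOrderOf_dvd_card (x := a)),
      Fintype.card_of_subtype _ mem_iff]
  rw [sum_subtype _ mem_iff, ← card_orbit, ← ZMod.card_units_eq_totient]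
  exact card_orbit_nsmul_sum_smul a F

/-- Hölder's evaluation of Ramanujan sums: `(ZMod N)ˣ` covers evenly both the elements of the same
order as `a` and those of the same order as `a * k`. -/
theorem sum_stdAddChar_mul_of_addOrderOf_eq (a k : ZMod N) :
    ∑ j : ZMod N with addOrderOf j = addOrderOf a, ZMod.stdAddChar (j * k) =
      (addOrderOf a).totient / (addOrderOf (a * k)).totient *
        (ArithmeticFunction.moebius (addOrderOf (a * k)) : ℂ) := by
  have orbit_a := totient_nsmul_sum_units_smul a fun j ↦ ZMod.stdAddChar (j * k)
  have orbit_mul := totient_nsmul_sum_units_smul (a * k) ZMod.stdAddChar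
  rw [sum_addChar_of_addOrderOf_eq_moebius ZMod.injective_stdAddChar addOrderOf_dvd_card]
    at orbit_mul
  simp only [smul_mul_assoc, nsmul_eq_mul] at orbit_a orbit_mul
  have totient_N : (N.totient : ℂ) ≠ 0 :=
    Nat.cast_ne_zero.2 (Nat.totient_pos.2 (NeZero.pos N)).ne'
  have totient_mul : ((addOrderOf (a * k)).totient : ℂ) ≠ 0 :=
    Nat.cast_ne_zero.2 (Nat.totient_pos.2 (addOrderOf_pos _)).ne'
  rw [div_mul_eq_mul_div, eq_div_iff totient_mul]
  apply mul_left_cancel₀ totient_N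
  linear_combination (addOrderOf a).totient * orbit_mul - (addOrderOf (a * k)).totient * orbit_a

theorem sum_stdAddChar_mul_of_gcd_eq {d : ℕ} (hd : d ∣ N) (k : ZMod N) :
    ∑ j : ZMod N with N.gcd j.val = d, ZMod.stdAddChar (j * k) =
      (N / d).totient / (addOrderOf (d * k)).totient *
        (ArithmeticFunction.moebius (addOrderOf (d * k)) : ℂ) := by
  have hN : N ≠ 0 := NeZero.ne N
  have addOrderOf_d : addOrderOf (d : ZMod N) = N / d := by
    rw [ZMod.addOrderOf_coe _ hN, Nat.gcd_eq_right hd]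
  rw [← addOrderOf_d, ← sum_stdAddChar_mul_of_addOrderOf_eq]
  refine sum_congr (filter_congr fun j _ ↦ ?_) fun _ _ ↦ rfl
  rw [addOrderOf_d, ← ZMod.natCast_zmod_val j, ZMod.addOrderOf_coe _ hN, ZMod.natCast_zmod_val,
    Nat.div_eq_iff_eq_of_dvd_dvd hN (Nat.gcd_dvd_left _ _) hd]

open scoped ZMod ComplexOrder in
theorem exists_addSubgroup_coe_eq_of_dft_indicator_nonneg {S : Set (ZMod N)} (hS : S.Nonempty)
    (h : ∀ k, 0 ≤ 𝓕 (S.indicator (1 : ZMod N → ℂ)) k) :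
    ∃ H : AddSubgroup (ZMod N), (H : Set (ZMod N)) = S := by
  refine exists_addSubgroup_coe_eq_of_indicator_eq
    (w := fun k ↦ (N : ℝ)⁻¹ * (𝓕 (S.indicator (1 : ZMod N → ℂ)) k).re)
    (χ := AddChar.mulShift ZMod.stdAddChar) hS
    (fun k ↦ mul_nonneg (by positivity) (Complex.nonneg_iff.1 (h k)).1) fun j ↦ ?_
  rw [← LinearEquiv.symm_apply_apply 𝓕 (S.indicator 1), ZMod.invDFT_apply, smul_sum,
    LinearEquiv.symm_apply_apply]
  refine sum_congr rfl fun k _ ↦ ?_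
  rw [Complex.ofReal_mul, ← Complex.eq_re_of_ofReal_le (h k), AddChar.mulShift_apply, smul_eq_mul,
    smul_eq_mul]
  push_cast
  ring

end ZMod

section GcdSet

/-- The residues modulo `N` whose greatest common divisor with `N` lies in `E`: a union of
orbits of `(ZMod N)ˣ`, whose Fourier coefficients are the numbers `acSum N E c`. The gcd is that of
the representative in `{0, …, N - 1}`, so the residue `0` has gcd `N`. -/
def gcdSet (N : ℕ) (E : Finset ℕ) : Set (ZMod N) :=
  {j | N.gcd j.val ∈ E}

variable {N : ℕ} {E : Finset ℕ}

theorem natCast_mem_gcdSet {d : ℕ} (hd : d ∣ N) : (d : ZMod N) ∈ gcdSet N E ↔ d ∈ E := by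
  rw [gcdSet, Set.mem_ofPred_eq, ZMod.val_natCast, Nat.gcd_comm, ← Nat.gcd_rec,
    Nat.gcd_eq_right hd]

variable [NeZero N]

open scoped ZMod in
theorem dft_indicator_gcdSet (hE : E ⊆ N.divisors) (u : (ZMod N)ˣ) (c : ℕ) :
    𝓕 ((gcdSet N E).indicator (1 : ZMod N → ℂ)) (u * c) = acSum N E c := by
  have addOrderOf_mul (d : ℕ) : addOrderOf (d * -(u * c : ZMod N)) = N / N.gcd (d * c) := by
    rw [mul_neg, addOrderOf_neg, mul_left_comm, ← smul_eq_mul, ← Units.smul_def,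
      addOrderOf_group_smul, ← Nat.cast_mul, ZMod.addOrderOf_coe _ (NeZero.ne N)]
  calc 𝓕 ((gcdSet N E).indicator (1 : ZMod N → ℂ)) (u * c)
      = ∑ j : ZMod N with N.gcd j.val ∈ E, ZMod.stdAddChar (j * -(u * c : ZMod N)) := by
        simp [ZMod.dft_apply, Set.indicator_apply, gcdSet, sum_filter]
    _ = ∑ d ∈ E, ∑ j : ZMod N with N.gcd j.val = d, ZMod.stdAddChar (j * -(u * c : ZMod N)) :=
        (sum_fiberwise_eq_sum_filter _ _ _ _).symm
    _ = acSum N E c := by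
        rw [acSum]
        push_cast
        refine sum_congr rfl fun d hd ↦ ?_
        rw [sum_stdAddChar_mul_of_gcd_eq (Nat.dvd_of_mem_divisors (hE hd)), addOrderOf_mul]

open scoped ZMod ComplexOrder in
theorem dft_indicator_gcdSet_nonneg (hE : E ⊆ N.divisors)
    (ha : ∀ c ∈ N.divisors, 0 ≤ acSum N E c) (k : ZMod N) :
    0 ≤ 𝓕 ((gcdSet N E).indicator (1 : ZMod N → ℂ)) k := by
  obtain ⟨c, hc, -, ⟨u, rfl⟩, rfl⟩ := ZMod.eq_unit_mul_divisor k
  rw [dft_indicator_gcdSet hE, ← Complex.ofReal_ratCast, Complex.zero_le_real]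
  exact mod_cast ha c (Nat.mem_divisors.2 ⟨hc, NeZero.ne N⟩)

end GcdSet

/-- If `E` is a nonempty set of divisors of `N` with `a_c(E) ≥ 0` for every divisor `c`
of `N`, then `E` is a filter in `D(N)`: `E = {d ∣ N : e ∣ d}` for some divisor `e` of `N`. -/
theorem acSum_nonneg_imp_filter
    (N : ℕ) (hN : 0 < N) (E : Finset ℕ) (hE : E ⊆ N.divisors) (hne : E.Nonempty)
    (ha : ∀ c ∈ N.divisors, 0 ≤ acSum N E c) :
    ∃ e ∈ N.divisors, E = N.divisors.filter (fun d => e ∣ d) := by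
  have : NeZero N := ⟨hN.ne'⟩
  have mem_gcdSet_iff {d : ℕ} (hd : d ∈ N.divisors) : (d : ZMod N) ∈ gcdSet N E ↔ d ∈ E :=
    natCast_mem_gcdSet (Nat.dvd_of_mem_divisors hd)
  have nonempty : (gcdSet N E).Nonempty :=
    hne.elim fun d hd ↦ ⟨d, (mem_gcdSet_iff (hE hd)).2 hd⟩
  obtain ⟨H, hH⟩ := exists_addSubgroup_coe_eq_of_dft_indicator_nonneg nonempty
    (dft_indicator_gcdSet_nonneg hE ha)
  obtain ⟨e, he, natCast_mem_iff⟩ := exists_dvd_forall_natCast_mem_iff_dvd H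
  refine ⟨e, Nat.mem_divisors.2 ⟨he, hN.ne'⟩, ext fun d ↦ ?_⟩
  have mem_iff (hd : d ∈ N.divisors) : d ∈ E ↔ e ∣ d := by
    rw [← mem_gcdSet_iff hd, ← hH, SetLike.mem_coe, natCast_mem_iff]
  rw [mem_filter]
  exact ⟨fun hd ↦ ⟨hE hd, (mem_iff (hE hd)).1 hd⟩, fun h ↦ (mem_iff h.1).2 h.2⟩
end

section
/- Let N be a positive integer and let ε = (ε_{ij})_{0≤i,j<N} be a matrix with entries in {0,1} such that ε/N is an idempotent of the group algebra ℂ[ℤ_N × ℤ_N], i.e. Σ_{i'+i''≡i mod N} Σ_{j'+j''≡j mod N} ε_{i'j'} ε_{i''j''} = N·ε_{ij} for all 0 ≤ i,j < N. Then either ε = 0, or there exist a unique divisor d of N and a unique integer t with 0 ≤ t ≤ d−1 such that for all 0 ≤ i,j < N: ε_{ij} = 1 if and only if (N/d) | i and d | (j − t·(i/(N/d))). -/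
/-!
Let `S` be the support of `ε`. Nothing cancels in a convolution of `{0,1}`-valued functions, so the
convolution identity says that `S + S = S`; as the group is finite, a nonempty such `S` is a
subgroup, and the identity at `0` gives `|S| = N`.

Every subgroup of `ℤ_M × ℤ_N` has generators in Hermite normal form: `m` generates its projection to
`ℤ_M`, `(0, e)` its intersection with `0 × ℤ_N`, and `(m, t)` with `t < e` and `(0, e)` the whole
subgroup. The projection has order `M / m` and the intersection order `N / e`. If `M = N` and the
subgroup has order `N`, this gives `m = N / e`, and `e` is the divisor `d`.
-/

open Finset

section Convolution

open scoped Pointwise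

variable {G R : Type*} [AddGroup G] [Fintype G] [NonAssocSemiring R]

lemma sum_mul_sub_eq_natCard {f : G → R} (h01 : ∀ g, f g = 0 ∨ f g = 1) (g : G) :
    ∑ h, f h * f (g - h) = (Nat.card {h // f h = 1 ∧ f (g - h) = 1} : R) := by
  classical
  rcases subsingleton_or_nontrivial R with _ | _
  · exact Subsingleton.elim _ _
  rw [Nat.card_eq_fintype_card, Fintype.card_subtype, natCast_card_filter]
  refine sum_congr rfl fun h _ => ?_
  rcases h01 h with hh | hh <;> rcases h01 (g - h) with hgh | hgh <;> simp [hh, hgh]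

variable [CharZero R]

lemma setOf_eq_one_add_setOf_eq_one {f : G → R} {c : R} (h01 : ∀ g, f g = 0 ∨ f g = 1) (hc : c ≠ 0)
    (hconv : ∀ g, ∑ h, f h * f (g - h) = c * f g) :
    {g | f g = 1} + {g | f g = 1} = {g | f g = 1} := by
  ext g
  calc g ∈ {g | f g = 1} + {g | f g = 1}
      ↔ Nonempty {h // f h = 1 ∧ f (g - h) = 1} := by
        simp only [nonempty_subtype, Set.mem_add, Set.mem_ofPred_eq]
        constructor
        · rintro ⟨a, ha, b, hb, rfl⟩
          exact ⟨b, hb, by rwa [add_sub_cancel_right]⟩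
        · rintro ⟨b, hb, ha⟩
          exact ⟨g - b, ha, b, hb, sub_add_cancel g b⟩
    _ ↔ c * f g ≠ 0 := by
        rw [← hconv, sum_mul_sub_eq_natCard h01, Nat.cast_ne_zero, ← Nat.pos_iff_ne_zero,
          Finite.card_pos_iff]
    _ ↔ f g = 1 := by rcases h01 g with hg | hg <;> simp [hg, hc]

theorem exists_addSubgroup_of_convolution_eq {f : G → R} {c : R}
    (h01 : ∀ g, f g = 0 ∨ f g = 1) (hc : c ≠ 0)
    (hconv : ∀ g, ∑ h, f h * f (g - h) = c * f g) (hne : ∃ g, f g ≠ 0) :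
    ∃ S : AddSubgroup G, (∀ g, f g = 1 ↔ g ∈ S) ∧ (Nat.card S : R) = c := by
  obtain ⟨g₀, hg₀⟩ := hne
  let S := addSubgroupOfIdempotent {g | f g = 1} ⟨g₀, (h01 g₀).resolve_left hg₀⟩
    (setOf_eq_one_add_setOf_eq_one h01 hc hconv)
  have hS (g : G) : f g = 1 ↔ g ∈ S := Iff.rfl
  refine ⟨S, hS, ?_⟩
  have h0 := hconv 0
  rw [sum_mul_sub_eq_natCard h01, (hS 0).2 S.zero_mem, mul_one] at h0
  simpa only [hS, zero_sub, neg_mem_iff, and_self] using h0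

end Convolution

section Subgroups

lemma mem_iff_natCard_nsmul_eq_zero {G : Type*} [AddGroup G] [IsAddCyclic G] [Finite G]
    (A : AddSubgroup G) (x : G) : x ∈ A ↔ Nat.card A • x = 0 := by
  classical
  have := Fintype.ofFinite G
  -- The `|A|`-torsion contains `A`, and in a cyclic group it has at most `|A|` elements.
  have hsub : ({y | y ∈ A} : Finset G) ⊆ ({y | Nat.card A • y = 0} : Finset G) := fun y hy => by
    rw [mem_filter_univ] at hy ⊢
    exact addOrderOf_dvd_iff_nsmul_eq_zero.1 (A.addOrderOf_dvd_natCard hy)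
  have hle : #{y : G | Nat.card A • y = 0} ≤ #{y | y ∈ A} := by
    rw [← Fintype.card_subtype (· ∈ A), ← Nat.card_eq_fintype_card]
    exact IsAddCyclic.card_nsmul_eq_zero_le Nat.card_pos
  simpa using Finset.ext_iff.1 (eq_of_subset_of_card_le hsub hle) x

lemma natCard_addSubgroup_zmod_dvd {N : ℕ} (A : AddSubgroup (ZMod N)) : Nat.card A ∣ N := by
  simpa only [Nat.card_zmod] using A.card_addSubgroup_dvd_card

lemma intCast_mem_addSubgroup_zmod_iff_dvd {N : ℕ} [NeZero N] (A : AddSubgroup (ZMod N)) (z : ℤ) :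
    (z : ZMod N) ∈ A ↔ ((N / Nat.card A : ℕ) : ℤ) ∣ z := by
  have hne : (Nat.card A : ℤ) ≠ 0 := mod_cast Nat.card_pos.ne'
  calc (z : ZMod N) ∈ A ↔ (N : ℤ) ∣ Nat.card A * z := by
        rw [mem_iff_natCard_nsmul_eq_zero, nsmul_eq_mul, ← ZMod.intCast_zmod_eq_zero_iff_dvd,
          Int.cast_mul, Int.cast_natCast]
    _ ↔ (Nat.card A : ℤ) * (N / Nat.card A : ℕ) ∣ Nat.card A * z := by
        rw [← Nat.cast_mul, Nat.mul_div_cancel' (natCard_addSubgroup_zmod_dvd A)]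
    _ ↔ ((N / Nat.card A : ℕ) : ℤ) ∣ z := mul_dvd_mul_iff_left hne

lemma mem_addSubgroup_zmod_iff_dvd_val {N : ℕ} [NeZero N] (A : AddSubgroup (ZMod N)) (x : ZMod N) :
    x ∈ A ↔ N / Nat.card A ∣ x.val := by
  rw [← Int.natCast_dvd_natCast, ← intCast_mem_addSubgroup_zmod_iff_dvd, Int.cast_natCast,
    ZMod.natCast_zmod_val]

lemma natCard_map_fst_mul_natCard_goursatSnd {G H : Type*} [AddGroup G] [AddGroup H]
    (S : AddSubgroup (G × H)) :
    Nat.card (S.map (AddMonoidHom.fst G H)) * Nat.card S.goursatSnd = Nat.card S := by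
  let p : S →+ G := (AddMonoidHom.fst G H).comp S.subtype
  have hrange : p.range = S.map (AddMonoidHom.fst G H) := by
    rw [AddMonoidHom.range_comp, AddSubgroup.range_subtype]
  have hker : Nat.card S.goursatSnd = Nat.card p.ker := by
    refine Nat.card_image_of_injOn (f := (AddMonoidHom.snd G H).comp S.subtype) ?_
    intro x hx y hy hxy
    have hfst : x.1.1 = y.1.1 := (AddMonoidHom.mem_ker.1 hx).trans (AddMonoidHom.mem_ker.1 hy).symm
    exact Subtype.ext (Prod.ext hfst hxy)
  rw [hker, ← hrange, ← AddSubgroup.index_ker, mul_comm, AddSubgroup.card_mul_index]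

end Subgroups

section HermiteSet

/-- The points of `ℤ_M × ℤ_N` whose representative in `[0, M) × [0, N)` lies in the lattice spanned
by `(m, t)` and `(0, e)`, where `m ≠ 0`; this basis is in Hermite normal form if `t < e`. The set
describes subgroups explicitly, but it need not be a subgroup for arbitrary `m`, `e`, `t`. -/
def hermiteSet (M N m e t : ℕ) : Set (ZMod M × ZMod N) :=
  {p | m ∣ p.1.val ∧ (e : ℤ) ∣ (p.2.val : ℤ) - (t : ℤ) * ((p.1.val / m : ℕ) : ℤ)}

variable {M N : ℕ}

lemma zero_mk_mem_hermiteSet {m e t : ℕ} {j : ZMod N} :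
    (0, j) ∈ hermiteSet M N m e t ↔ e ∣ j.val := by
  simp [hermiteSet, Int.natCast_dvd_natCast]

lemma natCast_mk_mem_hermiteSet {m e t : ℕ} {j : ZMod N} (hm : 0 < m) (hmM : m < M) :
    ((m : ZMod M), j) ∈ hermiteSet M N m e t ↔ t ≡ j.val [MOD e] := by
  simp only [hermiteSet, Set.mem_ofPred_eq, ZMod.val_natCast_of_lt hmM, Nat.div_self hm, dvd_refl,
    true_and, Nat.cast_one, mul_one, Nat.modEq_iff_dvd]

lemma dvd_of_hermiteSet_eq {m e t m' e' t' : ℕ} (he : e ∣ N) (he' : e' ∣ N)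
    (h : hermiteSet M N m e t = hermiteSet M N m' e' t') : e ∣ e' := by
  have hmem : ((0 : ZMod M), (e' : ZMod N)) ∈ hermiteSet M N m' e' t' := by
    rw [zero_mk_mem_hermiteSet, ZMod.val_natCast, Nat.dvd_mod_iff he']
  rwa [← h, zero_mk_mem_hermiteSet, ZMod.val_natCast, Nat.dvd_mod_iff he] at hmem

lemma eq_of_hermiteSet_eq {m e t t' : ℕ} (hm : 0 < m) (hmM : m < M) (he : e ∣ N)
    (ht : t < e) (ht' : t' < e) (h : hermiteSet M N m e t = hermiteSet M N m e t') : t = t' := by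
  have hval : ((t : ZMod N)).val ≡ t [MOD e] := by
    rw [ZMod.val_natCast]
    exact (Nat.mod_modEq t N).of_dvd he
  have hmem : ((m : ZMod M), (t : ZMod N)) ∈ hermiteSet M N m e t :=
    (natCast_mk_mem_hermiteSet hm hmM).2 hval.symm
  rw [h, natCast_mk_mem_hermiteSet hm hmM] at hmem
  exact ((hmem.trans hval).eq_of_lt_of_lt ht' ht).symm

theorem hermiteSet_div_injective [NeZero N] {d t d' t' : ℕ} (hd : d ∣ N) (ht : t < d)
    (hd' : d' ∣ N) (ht' : t' < d')
    (h : hermiteSet N N (N / d) d t = hermiteSet N N (N / d') d' t') : d = d' ∧ t = t' := by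
  obtain rfl : d = d' :=
    Nat.dvd_antisymm (dvd_of_hermiteSet_eq hd hd' h) (dvd_of_hermiteSet_eq hd' hd h.symm)
  refine ⟨rfl, ?_⟩
  obtain rfl | hd1 := (show 1 ≤ d by omega).eq_or_lt
  · omega
  have hN : 0 < N := NeZero.pos N
  exact eq_of_hermiteSet_eq (Nat.div_pos (Nat.le_of_dvd hN hd) (by omega))
    (Nat.div_lt_self hN hd1) hd ht ht' h

variable [NeZero M] [NeZero N]

lemma mk_mem_iff_zero_mk_mem (S : AddSubgroup (ZMod M × ZMod N)) {m t : ℕ}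
    (hmt : ((m : ZMod M), (t : ZMod N)) ∈ S) {i : ZMod M} (hi : m ∣ i.val) (j : ZMod N) :
    (i, j) ∈ S ↔ (0, (((j.val : ℤ) - (t : ℤ) * ((i.val / m : ℕ) : ℤ) : ℤ) : ZMod N)) ∈ S := by
  have him : (i.val / m) • (m : ZMod M) = i := by
    rw [nsmul_eq_mul, ← Nat.cast_mul, Nat.div_mul_cancel hi, ZMod.natCast_zmod_val]
  have hjt : (((j.val : ℤ) - (t : ℤ) * ((i.val / m : ℕ) : ℤ) : ℤ) : ZMod N) +
      (i.val / m) • (t : ZMod N) = j := by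
    simp only [Int.cast_sub, Int.cast_mul, Int.cast_natCast, ZMod.natCast_zmod_val, nsmul_eq_mul]
    ring
  rw [← S.add_mem_cancel_right (y := (0, _)) (S.nsmul_mem hmt (i.val / m)), Prod.smul_mk,
    Prod.mk_add_mk, zero_add, him, hjt]

lemma exists_lt_mk_natCast_mem {G : Type*} [AddGroup G] (S : AddSubgroup (G × ZMod N)) {a : G}
    (ha : a ∈ S.map (AddMonoidHom.fst G (ZMod N))) :
    ∃ t < N / Nat.card S.goursatSnd, (a, (t : ZMod N)) ∈ S := by
  obtain ⟨⟨a, b⟩, hab, rfl⟩ := ha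
  set e := N / Nat.card S.goursatSnd
  have he : 0 < e :=
    Nat.div_pos (Nat.le_of_dvd (NeZero.pos N) (natCard_addSubgroup_zmod_dvd _)) Nat.card_pos
  have hquot : (0, ((e * (b.val / e) : ℕ) : ZMod N)) ∈ S := by
    rw [← AddSubgroup.mem_goursatSnd]
    exact_mod_cast (intCast_mem_addSubgroup_zmod_iff_dvd _ _).2
      (Int.natCast_dvd_natCast.2 (dvd_mul_right e _))
  refine ⟨b.val % e, Nat.mod_lt _ he, (S.add_mem_cancel_right hquot).1 ?_⟩
  rwa [Prod.mk_add_mk, add_zero, ← Nat.cast_add, Nat.mod_add_div, ZMod.natCast_zmod_val]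

theorem exists_coe_eq_hermiteSet (S : AddSubgroup (ZMod M × ZMod N)) :
    ∃ t < N / Nat.card S.goursatSnd, (S : Set (ZMod M × ZMod N)) =
      hermiteSet M N (M / Nat.card (S.map (AddMonoidHom.fst (ZMod M) (ZMod N))))
        (N / Nat.card S.goursatSnd) t := by
  set A := S.map (AddMonoidHom.fst (ZMod M) (ZMod N))
  have hA : ((M / Nat.card A : ℕ) : ZMod M) ∈ A := by
    exact_mod_cast (intCast_mem_addSubgroup_zmod_iff_dvd A _).2 dvd_rfl
  obtain ⟨t, ht, hmt⟩ := exists_lt_mk_natCast_mem S hA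
  refine ⟨t, ht, Set.ext fun ⟨i, j⟩ => ?_⟩
  have hfst (h : (i, j) ∈ S) : M / Nat.card A ∣ i.val :=
    (mem_addSubgroup_zmod_iff_dvd_val A i).1 ⟨(i, j), h, rfl⟩
  refine (and_iff_right_of_imp hfst).symm.trans (and_congr_right fun hi => ?_)
  rw [mk_mem_iff_zero_mk_mem S hmt hi, ← AddSubgroup.mem_goursatSnd,
    intCast_mem_addSubgroup_zmod_iff_dvd]

theorem exists_coe_eq_hermiteSet_of_natCard_eq (S : AddSubgroup (ZMod N × ZMod N))
    (hS : Nat.card S = N) :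
    ∃ d t : ℕ, d ∣ N ∧ t < d ∧ (S : Set (ZMod N × ZMod N)) = hermiteSet N N (N / d) d t := by
  obtain ⟨t, ht, hSt⟩ := exists_coe_eq_hermiteSet S
  have hmul := (natCard_map_fst_mul_natCard_goursatSnd S).trans hS
  have hd : N / Nat.card S.goursatSnd = Nat.card (S.map (AddMonoidHom.fst (ZMod N) (ZMod N))) :=
    Nat.div_eq_of_eq_mul_left Nat.card_pos hmul.symm
  rw [hd] at ht hSt
  exact ⟨_, t, Dvd.intro _ hmul, ht, hSt⟩

end HermiteSet

theorem zero_one_idempotents_classification_general {R : Type*} [NonAssocSemiring R] [CharZero R]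
    (N : ℕ) [NeZero N] (ε : ZMod N → ZMod N → R)
    (h01 : ∀ i j : ZMod N, ε i j = 0 ∨ ε i j = 1)
    (hidem : ∀ i j : ZMod N,
      ∑ i' : ZMod N, ∑ j' : ZMod N, ε i' j' * ε (i - i') (j - j') = (N : R) * ε i j) :
    (∀ i j : ZMod N, ε i j = 0) ∨
    ∃! dt : ℕ × ℕ, dt.1 ∣ N ∧ dt.2 < dt.1 ∧
      ∀ i j : ZMod N,
        ε i j = 1 ↔
          (N / dt.1) ∣ i.val ∧
            (dt.1 : ℤ) ∣ ((j.val : ℤ) - (dt.2 : ℤ) * ((i.val / (N / dt.1) : ℕ) : ℤ)) := by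
  refine or_iff_not_imp_left.2 fun hne => ?_
  push Not at hne
  obtain ⟨i₀, j₀, h₀⟩ := hne
  obtain ⟨S, hS, hcard⟩ := exists_addSubgroup_of_convolution_eq (f := fun p => ε p.1 p.2)
    (fun p => h01 p.1 p.2) (Nat.cast_ne_zero.2 (NeZero.ne N))
    (fun p => by rw [Fintype.sum_prod_type]; exact hidem p.1 p.2) ⟨(i₀, j₀), h₀⟩
  have hdesc (d t : ℕ) : (∀ i j, ε i j = 1 ↔ (i, j) ∈ hermiteSet N N (N / d) d t) ↔
      (S : Set (ZMod N × ZMod N)) = hermiteSet N N (N / d) d t := by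
    simp only [Set.ext_iff, Prod.forall, SetLike.mem_coe, ← hS]
  obtain ⟨d, t, hd, ht, hSdt⟩ := exists_coe_eq_hermiteSet_of_natCard_eq S (Nat.cast_injective hcard)
  refine ⟨(d, t), ⟨hd, ht, (hdesc d t).2 hSdt⟩, ?_⟩
  rintro ⟨d', t'⟩ ⟨hd', ht', hSdt'⟩
  exact Prod.ext_iff.2
    (hermiteSet_div_injective hd' ht' hd ht (((hdesc d' t').1 hSdt').symm.trans hSdt))

/-- All idempotents `ε/N` of `ℂ[ℤ_N × ℤ_N]` with `{0,1}`-coefficients `ε_{ij}` are either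
trivial (`ε = 0`), or given by `ε_{ij} = δ_{(N/d ∣ i)} δ_{(d ∣ j − t·i/(N/d))}` for a unique
divisor `d ∣ N` and a unique `0 ≤ t ≤ d − 1`. -/
theorem zero_one_idempotents_classification
    (N : ℕ) [NeZero N] (ε : ZMod N → ZMod N → ℂ)
    (h01 : ∀ i j : ZMod N, ε i j = 0 ∨ ε i j = 1)
    (hidem : ∀ i j : ZMod N,
      ∑ i' : ZMod N, ∑ j' : ZMod N, ε i' j' * ε (i - i') (j - j') = (N : ℂ) * ε i j) :
    (∀ i j : ZMod N, ε i j = 0) ∨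
    ∃! dt : ℕ × ℕ, dt.1 ∣ N ∧ dt.2 < dt.1 ∧
      ∀ i j : ZMod N,
        ε i j = 1 ↔
          (N / dt.1) ∣ i.val ∧
            (dt.1 : ℤ) ∣ ((j.val : ℤ) - (dt.2 : ℤ) * ((i.val / (N / dt.1) : ℕ) : ℤ)) :=
  zero_one_idempotents_classification_general N ε h01 hidem
end
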